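/- Let F be a finite extension of ℚ₂ of degree m that does not contain a primitive cube root of unity. Then the number of Galois extensions of F with Galois group isomorphic to the alternating group A₄ is ν(F,A₄) = (2^{2m} − 1)/3. -/

import Mathlib

/-- `nu F G` is the number of intermediate fields `K` of a fixed algebraic closure of `F`
such that `K/F` is a finite Galois extension with Galois group isomorphic to `G`. -/
noncomputable def nu (F : Type*) [Field F] (G : Type*) [Group G] : ℕ :=
  Nat.card {K : IntermediateField F (AlgebraicClosure F) //
    FiniteDimensional F K ∧ IsGalois F K ∧ Nonempty ((K ≃ₐ[F] K) ≃* G)}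

/-!
Since `F` contains no primitive cube root of unity, its only Galois extension of degree three is
the unramified one, `L`. The fixed field of the Klein four-group in an `A₄`-extension of `F` is
cubic and Galois, so every such extension contains `L` and is biquadratic over it. Kummer theory
attaches to it the four-element group of those square classes of `L` that become trivial in it. As
`Gal(L/F)` permutes its three nontrivial classes cyclically, their norms become squares in `L`, and
hence are squares in `F` because `[L : F]` is odd. Conversely, a nontrivial square class `a` of
square norm has three distinct conjugates, of product one, and the square roots of these conjugates
generate the unique `A₄`-extension that trivializes `a`. The nontrivial elements of the kernel of
the norm `N` from `Lˣ/(Lˣ)²` to `Fˣ/(Fˣ)²` are thus partitioned into triples, one for each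
`A₄`-extension. A finite extension of `ℚ₂` of degree `d` has `2 ^ (d + 2)` square classes and `N`
is surjective, so for `[F : ℚ₂] = m` the kernel has `2 ^ (3 * m + 2) / 2 ^ (m + 2)` elements.
-/

open IsLocalRing Polynomial IntermediateField

section RootsOfUnity

variable {R : Type*} [CommRing R]

theorem eq_of_pow_eq_one_of_residue_eq [IsLocalRing R] {n : ℕ} (hn : (n : ResidueField R) ≠ 0)
    {x y : R} (hx : x ^ n = 1) (hy : y ^ n = 1) (hxy : residue R x = residue R y) : x = y := by
  have hn₀ : n ≠ 0 := by rintro rfl; simp at hn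
  have hunit : IsUnit (n * x ^ (n - 1)) := by
    refine .mul ?_ ((IsUnit.of_pow_eq_one hx hn₀).pow _)
    rwa [← residue_ne_zero_iff_isUnit, map_natCast]
  refine eq_of_eval_eq_zero_of_not_isUnit_sub (f := X ^ n - 1) (by simp [hx]) (by simp [hy]) ?_
    (by simpa [derivative_X_pow] using hunit)
  rw [← residue_ne_zero_iff_isUnit, map_sub, hxy, sub_self]
  exact not_not_intro rfl

theorem exists_isPrimitiveRoot_residue_eq [HenselianLocalRing R] {n : ℕ}
    (hn : (n : ResidueField R) ≠ 0) {ζ : ResidueField R} (hζ : IsPrimitiveRoot ζ n) :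
    ∃ z : R, IsPrimitiveRoot z n ∧ residue R z = ζ := by
  have hn₀ : n ≠ 0 := by rintro rfl; simp at hn
  obtain ⟨z₀, rfl⟩ := residue_surjective ζ
  have hz₀ : residue R ((X ^ n - C 1 : R[X]).eval z₀) = 0 := by
    rw [eval_sub, eval_pow, eval_X, eval_C, map_sub, map_pow, hζ.pow_eq_one, map_one, sub_self]
  have hunit : residue R ((X ^ n - C 1 : R[X]).derivative.eval z₀) ≠ 0 := by
    rw [derivative_sub, derivative_X_pow, derivative_C, sub_zero, eval_mul, eval_pow, eval_X,
      eval_C, map_mul, map_pow, map_natCast]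
    exact mul_ne_zero hn (pow_ne_zero _ (hζ.ne_zero hn₀))
  obtain ⟨z, hz, hzz₀⟩ := HenselianLocalRing.is_henselian _ (monic_X_pow_sub_C (1 : R) hn₀) z₀
    ((residue_eq_zero_iff _).1 hz₀) ((residue_ne_zero_iff_isUnit _).1 hunit)
  have hres : residue R z = residue R z₀ := by
    rwa [← sub_eq_zero, ← map_sub, residue_eq_zero_iff]
  have hpow : z ^ n = 1 := by simpa [IsRoot, sub_eq_zero] using hz
  refine ⟨z, ⟨hpow, fun l hl ↦ hζ.dvd_of_pow_eq_one l ?_⟩, hres⟩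
  rw [← hres, ← map_pow, hl, map_one]

end RootsOfUnity

section GroupAction

variable {B G : Type*} [CommRing B] [Group G] [MulSemiringAction G B]

theorem dvd_inv_smul_of_dvd_smul [Finite G] {σ : G} {y : B} (h : y ∣ σ • y) : y ∣ σ⁻¹ • y := by
  have hpow (i : ℕ) : y ∣ σ ^ i • y := by
    induction i with
    | zero => rw [pow_zero, one_smul]
    | succ i ih =>
      rw [pow_succ', mul_smul]
      exact h.trans (map_dvd (MulSemiringAction.toRingHom G B σ) ih)
  obtain ⟨i, hi⟩ := mem_powers_iff_mem_zpowers.2 (inv_mem (Subgroup.mem_zpowers σ))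
  exact hi ▸ hpow i

theorem associated_smul [IsDomain B] [ValuationRing B] [Finite G] (σ : G) (y : B) :
    Associated y (σ • y) := by
  have smul_dvd {τ : G} {z w : B} (h : z ∣ w) : τ • z ∣ τ • w :=
    map_dvd (MulSemiringAction.toRingHom G B τ) h
  have dvd_smul_and_dvd_inv_smul : y ∣ σ • y ∧ y ∣ σ⁻¹ • y := by
    rcases ValuationRing.dvd_total y (σ • y) with h | h
    · exact ⟨h, dvd_inv_smul_of_dvd_smul h⟩
    · have h' : y ∣ σ⁻¹ • y := by simpa using smul_dvd (τ := σ⁻¹) h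
      exact ⟨by simpa using dvd_inv_smul_of_dvd_smul h', h'⟩
  refine associated_of_dvd_dvd dvd_smul_and_dvd_inv_smul.1 ?_
  simpa using smul_dvd (τ := σ) dvd_smul_and_dvd_inv_smul.2

theorem exists_pow_smul_eq_mul [IsLocalRing B] {σ : G} {y u : B} (hy : σ • y = u * y)
    (htriv : ∀ x : ResidueField B, σ • x = x) (i : ℕ) :
    ∃ v : B, σ ^ i • y = v * y ∧ residue B v = residue B u ^ i := by
  induction i with
  | zero => exact ⟨1, by simp⟩
  | succ i ih =>
    obtain ⟨v, hv, hres⟩ := ih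
    refine ⟨(σ • v) * u, ?_, ?_⟩
    · rw [pow_succ', mul_smul, hv, smul_mul', hy, mul_assoc]
    · rw [map_mul, ResidueField.residue_smul, htriv, hres, pow_succ]

/- For `y = b - σ b` the ratio `u = σ y / y` is a unit, and the telescoping sum `∑ σⁱ y = 0` reduces
to `∑ uⁱ = 0` in the residue field. -/
theorem exists_isPrimitiveRoot_residueField [IsDomain B] [ValuationRing B] [Finite G] {ℓ : ℕ}
    (hℓ : ℓ.Prime) (hk : (ℓ : ResidueField B) ≠ 0) {σ : G} (hσ : σ ^ ℓ = 1)
    (htriv : ∀ x : ResidueField B, σ • x = x) {b : B} (hb : σ • b ≠ b) :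
    ∃ ζ : ResidueField B, IsPrimitiveRoot ζ ℓ := by
  set y := b - σ • b with hy
  obtain ⟨u, hu⟩ : ∃ u, σ • y = u * y :=
    let ⟨u, hu⟩ := associated_smul σ y
    ⟨u, by rw [← hu, mul_comm]⟩
  choose v hv hres using exists_pow_smul_eq_mul hu htriv
  have hsum : ∑ i ∈ Finset.range ℓ, v i = 0 := by
    have htel : ∑ i ∈ Finset.range ℓ, σ ^ i • y = 0 := by
      simp only [hy, smul_sub, smul_smul, ← pow_succ]
      rw [Finset.sum_range_sub', hσ, pow_zero, sub_self]
    simp only [hv, ← Finset.sum_mul] at htel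
    exact (mul_eq_zero.1 htel).resolve_right (sub_ne_zero.2 hb.symm)
  have hgeom : ∑ i ∈ Finset.range ℓ, residue B u ^ i = 0 := by
    simpa only [map_sum, map_zero, hres] using congrArg (residue B) hsum
  refine ⟨residue B u, IsPrimitiveRoot.iff_orderOf.2 (orderOf_eq_prime (hp := ⟨hℓ⟩) ?_ ?_)⟩
  · rw [← sub_eq_zero, ← mul_geom_sum, hgeom, mul_zero]
  · intro h
    simp [h] at hgeom
    contradiction

end GroupAction

theorem exists_isPrimitiveRoot_card_sub_one (k : Type*) [Field k] [Finite k] :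
    ∃ ζ : k, IsPrimitiveRoot ζ (Nat.card k - 1) ∧ ∀ x ≠ 0, ∃ i : ℕ, ζ ^ i = x := by
  obtain ⟨ζ, hζ⟩ := IsCyclic.exists_monoid_generator (α := kˣ)
  refine ⟨ζ, ?_, fun x hx ↦ ?_⟩
  · rw [← Nat.card_units, IsPrimitiveRoot.coe_units_iff, IsPrimitiveRoot.iff_orderOf]
    exact orderOf_eq_card_of_forall_mem_powers hζ
  · obtain ⟨i, hi⟩ := hζ (Units.mk0 x hx)
    exact ⟨i, by simpa using congrArg Units.val hi⟩

theorem card_le_of_forall_pow_eq_self {k : Type*} [Field k] {q : ℕ} (hq : 1 < q)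
    (h : ∀ x : k, x ^ q = x) : Nat.card k ≤ q := by
  have hne := FiniteField.X_pow_card_sub_X_ne_zero k hq
  have hroot (x : k) : x ∈ (X ^ q - X : k[X]).rootSet k := by
    simp [mem_rootSet, hne, h]
  rw [← Nat.card_congr (Equiv.Set.univ k), ← Set.eq_univ_of_forall hroot, Nat.card_coe_set_eq]
  exact (ncard_rootSet_le _ _).trans_eq (FiniteField.X_pow_card_sub_X_natDegree_eq k hq)

section Invariant

variable {A B G : Type*} [CommRing A] [CommRing B] [Algebra A B] [Group G] [MulSemiringAction G B]

/- The primitive `ℓ`-th root of unity in the residue field lifts uniquely to `B`, so its lift is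
invariant. -/
theorem faithfulSMul_residueField_of_card_prime [IsDomain B] [ValuationRing B]
    [HenselianLocalRing B] [FaithfulSMul A B] [FaithfulSMul G B] [Algebra.IsInvariant A B G]
    (hℓ : (Nat.card G).Prime) (hk : (Nat.card G : ResidueField B) ≠ 0)
    (hA : ¬ ∃ ζ : A, IsPrimitiveRoot ζ (Nat.card G)) : FaithfulSMul G (ResidueField B) := by
  have := Nat.finite_of_card_ne_zero hℓ.ne_zero
  have : Fact (Nat.card G).Prime := ⟨hℓ⟩
  rw [faithfulSMul_iff]
  intro σ htriv
  by_contra hσ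
  obtain ⟨b, hb⟩ : ∃ b : B, σ • b ≠ b := by
    by_contra! h
    exact hσ (eq_of_smul_eq_smul fun b : B ↦ by rw [h, one_smul])
  obtain ⟨ζ', hζ'⟩ := exists_isPrimitiveRoot_residueField hℓ hk (pow_card_eq_one' (x := σ)) htriv hb
  obtain ⟨ζ, hζ, -⟩ := exists_isPrimitiveRoot_residue_eq hk hζ'
  have hσζ : σ • ζ = ζ := eq_of_pow_eq_one_of_residue_eq hk
    (by rw [← smul_pow', hζ.pow_eq_one, smul_one]) hζ.pow_eq_one
    (by rw [ResidueField.residue_smul, htriv])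
  have hinv (g : G) : g • ζ = ζ := by
    obtain ⟨i, rfl⟩ := mem_powers_of_prime_card (g' := g) rfl hσ
    exact pow_mem (S := MulAction.stabilizer G ζ) hσζ i
  obtain ⟨z, rfl⟩ := Algebra.IsInvariant.isInvariant (A := A) ζ hinv
  exact hA ⟨z, hζ.of_map_of_injective (FaithfulSMul.algebraMap_injective A B)⟩

variable [IsLocalRing A] [HenselianLocalRing B] [IsLocalHom (algebraMap A B)]
  [Finite (ResidueField B)]

variable (A B) in
theorem natCast_card_residueField_pow_sub_one_ne_zero {n : ℕ} (hn : n ≠ 0) :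
    ((Nat.card (ResidueField A) ^ n - 1 : ℕ) : ResidueField B) ≠ 0 := by
  have : Finite (ResidueField A) :=
    .of_injective _ (algebraMap (ResidueField A) (ResidueField B)).injective
  have hq : ((Nat.card (ResidueField A) : ℕ) : ResidueField B) = 0 := by
    have := Fintype.ofFinite (ResidueField A)
    rw [← map_natCast (algebraMap (ResidueField A) (ResidueField B)), Nat.card_eq_fintype_card,
      Nat.cast_card_eq_zero, map_zero]
  rw [Nat.cast_sub (Nat.one_le_pow _ _ Nat.card_pos), Nat.cast_pow, hq, zero_pow hn]
  simp

variable [Finite G] [SMulCommClass G A B] [Algebra.IsInvariant A B G]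

variable (A B G) in
theorem exists_smul_eq_pow_card_residueField :
    ∃ φ : G, ∀ x : ResidueField B, φ • x = x ^ Nat.card (ResidueField A) := by
  have : Finite (B ⧸ maximalIdeal B) := inferInstanceAs (Finite (ResidueField B))
  obtain ⟨φ, hφ⟩ := IsArithFrobAt.exists_of_isInvariant A G (maximalIdeal B)
  refine ⟨φ, fun x ↦ ?_⟩
  obtain ⟨b, rfl⟩ := residue_surjective x
  rw [← ResidueField.residue_smul, ← map_pow, ← sub_eq_zero, ← map_sub, residue_eq_zero_iff]
  have := hφ b
  rwa [← Ideal.over_def (maximalIdeal B) (maximalIdeal A)] at this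

variable (A B G) in
theorem card_residueField_eq_pow_card [FaithfulSMul G (ResidueField B)] :
    Nat.card (ResidueField B) = Nat.card (ResidueField A) ^ Nat.card G := by
  have : Finite (ResidueField A) :=
    .of_injective _ (algebraMap (ResidueField A) (ResidueField B)).injective
  let k₀ := FixedPoints.subfield G (ResidueField B)
  have hle : Nat.card k₀ ≤ Nat.card (ResidueField A) := by
    obtain ⟨φ, hφ⟩ := exists_smul_eq_pow_card_residueField A B G
    exact card_le_of_forall_pow_eq_self Finite.one_lt_card fun x ↦
      Subtype.ext ((hφ x).symm.trans (x.2 φ))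
  have hge : Nat.card (ResidueField A) ≤ Nat.card k₀ := by
    refine Nat.card_le_card_of_injective
      ((algebraMap (ResidueField A) (ResidueField B)).codRestrict k₀ fun x g ↦ ?_)
      (RingHom.injective _)
    obtain ⟨a, rfl⟩ := residue_surjective x
    rw [ResidueField.algebraMap_residue, ← ResidueField.residue_smul, smul_algebraMap]
  have := Fintype.ofFinite G
  rw [Module.natCard_eq_pow_finrank (K := k₀), hle.antisymm hge, FixedPoints.finrank_eq_card,
    Nat.card_eq_fintype_card (α := G)]

theorem exists_isPrimitiveRoot_of_faithfulSMul_residueField [FaithfulSMul G (ResidueField B)] :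
    ∃ ζ : B, IsPrimitiveRoot ζ (Nat.card (ResidueField A) ^ Nat.card G - 1) ∧
      ∀ g : G, g • ζ = ζ → g = 1 := by
  obtain ⟨ζ', hζ', hgen⟩ := exists_isPrimitiveRoot_card_sub_one (ResidueField B)
  rw [card_residueField_eq_pow_card A B G] at hζ'
  obtain ⟨ζ, hζ, rfl⟩ := exists_isPrimitiveRoot_residue_eq
    (natCast_card_residueField_pow_sub_one_ne_zero A B Nat.card_pos.ne') hζ'
  refine ⟨ζ, hζ, fun g hg ↦ eq_of_smul_eq_smul fun x : ResidueField B ↦ ?_⟩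
  rcases eq_or_ne x 0 with rfl | hx
  · simp
  · obtain ⟨i, rfl⟩ := hgen x hx
    rw [smul_pow', ← ResidueField.residue_smul, hg, one_smul]

omit [Finite G] [SMulCommClass G A B] [Algebra.IsInvariant A B G] in
theorem faithfulSMul_residueField_of_isPrimitiveRoot {n : ℕ} (hn : n ≠ 0) {ζ : B}
    (hζ : IsPrimitiveRoot ζ (Nat.card (ResidueField A) ^ n - 1))
    (hstab : ∀ g : G, g • ζ = ζ → g = 1) : FaithfulSMul G (ResidueField B) := by
  rw [faithfulSMul_iff]
  refine fun g hg ↦ hstab g (eq_of_pow_eq_one_of_residue_eq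
    (natCast_card_residueField_pow_sub_one_ne_zero A B hn) ?_ hζ.pow_eq_one ?_)
  · rw [← smul_pow', hζ.pow_eq_one, smul_one]
  · rw [ResidueField.residue_smul, hg]

theorem card_le_of_isPrimitiveRoot {n : ℕ} (hn : n ≠ 0) {ζ : B}
    (hζ : IsPrimitiveRoot ζ (Nat.card (ResidueField A) ^ n - 1))
    (hstab : ∀ g : G, g • ζ = ζ → g = 1) : Nat.card G ≤ n := by
  have := faithfulSMul_residueField_of_isPrimitiveRoot hn hζ hstab
  have : Finite (ResidueField A) :=
    .of_injective _ (algebraMap (ResidueField A) (ResidueField B)).injective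
  obtain ⟨φ, hφ⟩ := exists_smul_eq_pow_card_residueField A B G
  have hφpow (i : ℕ) (x : ResidueField B) : φ ^ i • x = x ^ Nat.card (ResidueField A) ^ i := by
    induction i with
    | zero => simp
    | succ i ih => rw [pow_succ', mul_smul, hφ, ih, ← pow_mul, pow_succ]
  have hqn : 1 ≤ Nat.card (ResidueField A) ^ n := Nat.one_le_pow _ _ Nat.card_pos
  have hφn : φ ^ n = 1 := by
    refine hstab _ (eq_of_pow_eq_one_of_residue_eq
      (natCast_card_residueField_pow_sub_one_ne_zero A B hn) ?_ hζ.pow_eq_one ?_)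
    · rw [← smul_pow', hζ.pow_eq_one, smul_one]
    · rw [ResidueField.residue_smul, hφpow, ← map_pow, ← Nat.sub_add_cancel hqn, pow_succ,
        hζ.pow_eq_one, one_mul]
  refine (Nat.pow_le_pow_iff_right (Finite.one_lt_card (α := ResidueField A))).1 ?_
  rw [← card_residueField_eq_pow_card A B G]
  exact card_le_of_forall_pow_eq_self (Nat.one_lt_pow hn Finite.one_lt_card) fun x ↦ by
    rw [← hφpow, hφn, one_smul]

theorem le_card_of_isPrimitiveRoot {n : ℕ} (hn : n ≠ 0) {ζ : B}
    (hζ : IsPrimitiveRoot ζ (Nat.card (ResidueField A) ^ n - 1))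
    (hstab : ∀ g : G, g • ζ = ζ → g = 1) : n ≤ Nat.card G := by
  have := faithfulSMul_residueField_of_isPrimitiveRoot hn hζ hstab
  have : Finite (ResidueField A) :=
    .of_injective _ (algebraMap (ResidueField A) (ResidueField B)).injective
  have hres : residue B ζ ^ (Nat.card (ResidueField B) - 1) = 1 := by
    have := Fintype.ofFinite (ResidueField B)
    rw [Nat.card_eq_fintype_card]
    exact FiniteField.pow_card_sub_one_eq_one _
      (((hζ.isUnit (Nat.sub_ne_zero_of_lt (Nat.one_lt_pow hn Finite.one_lt_card))).map _).ne_zero)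
  have hpow : ζ ^ (Nat.card (ResidueField B) - 1) = 1 := by
    refine eq_of_pow_eq_one_of_residue_eq (natCast_card_residueField_pow_sub_one_ne_zero A B hn)
      ?_ (one_pow _) (by rw [map_pow, hres, map_one])
    rw [pow_right_comm, hζ.pow_eq_one, one_pow]
  have hle := Nat.le_of_dvd (Nat.sub_pos_of_lt Finite.one_lt_card) (hζ.dvd_of_pow_eq_one _ hpow)
  rw [card_residueField_eq_pow_card A B G] at hle
  exact (Nat.pow_le_pow_iff_right (Finite.one_lt_card (α := ResidueField A))).1
    ((Nat.sub_le_sub_iff_right (Nat.one_le_pow _ _ Nat.card_pos)).1 hle)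

end Invariant

section RingOfIntegers

theorem isAdicComplete_maximalIdeal_of_compactSpace (R : Type*) [CommRing R] [IsLocalRing R]
    [IsNoetherianRing R] [TopologicalSpace R] [IsTopologicalRing R] [CompactSpace R] [T2Space R] :
    IsAdicComplete (maximalIdeal R) R where
  prec' f hf := by
    let S (n : ℕ) : Set R := {x | f n - x ∈ maximalIdeal R ^ n}
    have hclosed (n : ℕ) : IsClosed (S n) :=
      (IsNoetherianRing.isClosed_ideal (maximalIdeal R ^ n)).preimage (by fun_prop)
    have hanti (n : ℕ) : S (n + 1) ⊆ S n := fun x hx ↦ by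
      have hn : f n - f (n + 1) ∈ maximalIdeal R ^ n := by
        simpa [SModEq.sub_mem] using hf n.le_succ
      simpa [S] using add_mem hn (Ideal.pow_le_pow_right n.le_succ hx)
    obtain ⟨x, hx⟩ := (hclosed 0).isCompact.nonempty_iInter_of_sequence_nonempty_isCompact_isClosed
      S hanti (fun n ↦ ⟨f n, by simp [S]⟩) hclosed
    exact ⟨x, fun n ↦ by simpa [SModEq.sub_mem, S] using Set.mem_iInter.1 hx n⟩

theorem henselianLocalRing_of_isAdicComplete (R : Type*) [CommRing R] [IsLocalRing R]
    [IsAdicComplete (maximalIdeal R) R] : HenselianLocalRing R where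
  is_henselian f hf a h₁ h₂ := HenselianRing.is_henselian f hf a h₁ (h₂.map _)

variable {p : ℕ} [Fact p.Prime] {E : Type*} [Field E] [Algebra ℤ_[p] E] [Algebra ℚ_[p] E]
  [IsScalarTower ℤ_[p] ℚ_[p] E]

theorem isIntegral_padicInt_of_spectralNorm_le_one {x : E} (hx : IsIntegral ℚ_[p] x)
    (h : spectralNorm ℚ_[p] E x ≤ 1) : IsIntegral ℤ_[p] x := by
  rw [spectralNorm, spectralValue_le_one_iff (minpoly.monic hx)] at h
  have hlifts : minpoly ℚ_[p] x ∈ lifts (algebraMap ℤ_[p] ℚ_[p]) :=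
    (lifts_iff_coeff_lifts _).2 fun n ↦ ⟨⟨_, h n⟩, rfl⟩
  obtain ⟨q, hq, -, hmonic⟩ := lifts_and_natDegree_eq_and_monic hlifts (minpoly.monic hx)
  refine ⟨q, hmonic, ?_⟩
  rw [← aeval_def, ← aeval_map_algebraMap ℚ_[p], hq, minpoly.aeval]

variable [FiniteDimensional ℚ_[p] E]

variable (p) in
theorem isIntegral_padicInt_or_inv (x : E) : IsIntegral ℤ_[p] x ∨ IsIntegral ℤ_[p] x⁻¹ := by
  rcases eq_or_ne x 0 with rfl | hx
  · exact .inl isIntegral_zero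
  have hmul : spectralNorm ℚ_[p] E x * spectralNorm ℚ_[p] E x⁻¹ = 1 := by
    simp only [← spectralMulAlgNorm_def, ← map_mul, mul_inv_cancel₀ hx, map_one]
  have hint (y : E) := isIntegral_padicInt_of_spectralNorm_le_one
    (Algebra.IsIntegral.isIntegral (R := ℚ_[p]) y)
  refine Or.imp (hint x) (hint x⁻¹) (or_iff_not_imp_left.2 fun h ↦ ?_)
  exact (eq_inv_of_mul_eq_one_right hmul).trans_le (inv_le_one_of_one_le₀ (le_of_not_ge h))

variable (p E) (O : Type*) [CommRing O] [IsDomain O] [Algebra O E] [Algebra ℤ_[p] O]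
  [IsScalarTower ℤ_[p] O E] [IsIntegralClosure O ℤ_[p] E]

include p E

theorem valuationRing_of_isIntegralClosure : ValuationRing O := by
  have := IsIntegralClosure.isFractionRing_of_finite_extension ℤ_[p] ℚ_[p] E O
  refine (ValuationRing.iff_isInteger_or_isInteger O E).2 fun x ↦ ?_
  exact (isIntegral_padicInt_or_inv p x).imp IsIntegralClosure.isIntegral_iff.1
    IsIntegralClosure.isIntegral_iff.1

theorem henselianLocalRing_of_isIntegralClosure : HenselianLocalRing O := by
  have := valuationRing_of_isIntegralClosure p E O
  have := IsIntegralClosure.isNoetherianRing ℤ_[p] ℚ_[p] E O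
  have := IsIntegralClosure.finite ℤ_[p] ℚ_[p] E O
  have : Module.IsTorsionFree ℤ_[p] E := .trans_faithfulSMul ℤ_[p] ℚ_[p] E
  have : Module.Free ℤ_[p] O := IsIntegralClosure.module_free ℤ_[p] ℚ_[p] E O
  let : TopologicalSpace O := moduleTopology ℤ_[p] O
  have : IsModuleTopology ℤ_[p] O := ⟨rfl⟩
  have : IsTopologicalRing O := IsModuleTopology.isTopologicalRing ℤ_[p] O
  let e := (Module.finBasis ℤ_[p] O).equivFun
  have : ContinuousAdd O := inferInstance
  have : CompactSpace O := e.symm.surjective.compactSpace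
    (IsModuleTopology.continuous_of_linearMap e.symm.toLinearMap)
  have : T2Space O := .of_injective_continuous e.injective
    (IsModuleTopology.continuous_of_linearMap e.toLinearMap)
  have := isAdicComplete_maximalIdeal_of_compactSpace O
  exact henselianLocalRing_of_isAdicComplete O

theorem natCard_quotient_span_of_isIntegralClosure :
    Nat.card (O ⧸ Ideal.span {(p : O)}) = p ^ Module.finrank ℚ_[p] E := by
  have := IsIntegralClosure.isFractionRing_of_finite_extension ℤ_[p] ℚ_[p] E O
  have := IsIntegralClosure.finite ℤ_[p] ℚ_[p] E O
  have : Module.IsTorsionFree ℤ_[p] E := .trans_faithfulSMul ℤ_[p] ℚ_[p] E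
  have : Module.Free ℤ_[p] O := IsIntegralClosure.module_free ℤ_[p] ℚ_[p] E O
  have hmap : Ideal.span {(p : O)} = (maximalIdeal ℤ_[p]).map (algebraMap ℤ_[p] O) := by
    rw [PadicInt.maximalIdeal_eq_span_p, Ideal.map_span, Set.image_singleton, map_natCast]
  have hcard : Nat.card (ℤ_[p] ⧸ maximalIdeal ℤ_[p]) = p :=
    (Nat.card_congr PadicInt.residueField.toEquiv).trans (Nat.card_zmod p)
  let := Ideal.Quotient.field (maximalIdeal ℤ_[p])
  rw [hmap, Module.natCard_eq_pow_finrank (K := ℤ_[p] ⧸ maximalIdeal ℤ_[p]), hcard,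
    IsLocalRing.finrank_quotient_map, IsIntegralClosure.rank ℤ_[p] ℚ_[p] E O]

theorem natCast_mem_maximalIdeal_of_isIntegralClosure [IsLocalRing O] :
    (p : O) ∈ maximalIdeal O := by
  rw [mem_maximalIdeal, mem_nonunits_iff, ← Ideal.span_singleton_eq_top]
  intro h
  have hcard := natCard_quotient_span_of_isIntegralClosure p E O
  rw [h, Nat.card_unique] at hcard
  exact (Nat.one_lt_pow Module.finrank_pos.ne' (Fact.out : p.Prime).one_lt).ne hcard

theorem finite_residueField_of_isIntegralClosure [IsLocalRing O] : Finite (ResidueField O) := by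
  have : Finite (O ⧸ Ideal.span {(p : O)}) := Nat.finite_of_card_ne_zero <|
    natCard_quotient_span_of_isIntegralClosure p E O ▸
      pow_ne_zero _ (Fact.out : p.Prime).ne_zero
  have hle : Ideal.span {(p : O)} ≤ maximalIdeal O :=
    (Ideal.span_singleton_le_iff_mem _).2 (natCast_mem_maximalIdeal_of_isIntegralClosure p E O)
  exact .of_surjective _ (Ideal.Quotient.factor_surjective hle)

theorem isDiscreteValuationRing_of_isIntegralClosure : IsDiscreteValuationRing O := by
  have := valuationRing_of_isIntegralClosure p E O
  have : IsPrincipalIdealRing O :=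
    ((IsBezout.TFAE (R := O)).out 0 1 :).1 (IsIntegralClosure.isNoetherianRing ℤ_[p] ℚ_[p] E O)
  have : CharZero E := charZero_of_injective_algebraMap (algebraMap ℚ_[p] E).injective
  refine { not_a_field' := fun h ↦ (Fact.out : p.Prime).ne_zero ?_ }
  have hp := natCast_mem_maximalIdeal_of_isIntegralClosure p E O
  rw [h, Ideal.mem_bot] at hp
  rw [← Nat.cast_eq_zero (R := E), ← map_natCast (algebraMap O E), hp, map_zero]

end RingOfIntegers

section UnitSquares

theorem index_range_eq_card_ker_mul_relIndex {G : Type*} [CommGroup G] (f : G →* G)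
    (H : Subgroup G) [H.FiniteIndex] (hker : H ⊓ f.ker = ⊥) (hmap : H.map f ≤ H) :
    f.range.index = Nat.card f.ker * (H.map f).relIndex H := by
  have hsup : H.relIndex (H ⊔ f.ker) = Nat.card f.ker := by
    rw [sup_comm, Subgroup.relIndex_sup_right, ← Subgroup.inf_relIndex_right, hker,
      Subgroup.relIndex_bot_left]
  have hcard := Subgroup.relIndex_mul_index (le_sup_left : H ≤ H ⊔ f.ker)
  have hindex : (H ⊔ f.ker).index ≠ 0 :=
    right_ne_zero_of_mul (hcard ▸ Subgroup.FiniteIndex.index_ne_zero (H := H))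
  refine mul_left_cancel₀ hindex ?_
  rw [← Subgroup.index_map, ← Subgroup.relIndex_mul_index hmap, ← hcard, hsup]
  ring

/-- The group `1 + cR` of units of `R` congruent to `1` modulo `c`. -/
def congruenceSubgroup {R : Type*} [CommRing R] (c : R) : Subgroup Rˣ :=
  (Units.map (Ideal.Quotient.mk (Ideal.span {c})).toMonoidHom).ker

variable {R : Type*} [CommRing R]

theorem mem_congruenceSubgroup {c : R} {u : Rˣ} :
    u ∈ congruenceSubgroup c ↔ ∃ y, (u : R) = 1 + c * y := by
  rw [congruenceSubgroup, MonoidHom.mem_ker, Units.ext_iff]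
  refine (Ideal.Quotient.mk_eq_mk_iff_sub_mem (u : R) 1).trans ?_
  simp only [Ideal.mem_span_singleton, dvd_def, sub_eq_iff_eq_add']

theorem isUnit_one_add_mul [IsLocalRing R] {c : R} (hc : c ∈ maximalIdeal R) (y : R) :
    IsUnit (1 + c * y) := by
  rw [← residue_ne_zero_iff_isUnit, map_add, map_mul, (residue_eq_zero_iff c).2 hc]
  simp

theorem relIndex_congruenceSubgroup_mul [IsDomain R] [IsLocalRing R] {c d : R} (hc₀ : c ≠ 0)
    (hc : c ∈ maximalIdeal R) (hdc : d ∣ c) :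
    (congruenceSubgroup (c * d)).relIndex (congruenceSubgroup c) =
      Nat.card (R ⧸ Ideal.span {d}) := by
  choose y hy using fun u : congruenceSubgroup c ↦ mem_congruenceSubgroup.1 u.2
  have hy_eq {u : congruenceSubgroup c} {z : R} (h : (u : Rˣ) = 1 + c * z) : y u = z :=
    mul_left_cancel₀ hc₀ (add_left_cancel ((hy u).symm.trans h))
  let χ : congruenceSubgroup c →* Multiplicative (R ⧸ Ideal.span {d}) :=
    MonoidHom.mk' (fun u ↦ .ofAdd (Ideal.Quotient.mk _ (y u))) fun u v ↦ by
      have huv : y (u * v) = y u + y v + c * (y u * y v) := hy_eq <| by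
        rw [Subgroup.coe_mul, Units.val_mul, hy u, hy v]
        ring
      have hcd : Ideal.Quotient.mk (Ideal.span {d}) c = 0 :=
        Ideal.Quotient.eq_zero_iff_dvd d c |>.2 hdc
      simp only [huv, map_add, map_mul, hcd, zero_mul, add_zero, ofAdd_add]
  have hker : (congruenceSubgroup (c * d)).subgroupOf (congruenceSubgroup c) = χ.ker := by
    ext u
    have hχ : u ∈ χ.ker ↔ d ∣ y u := Ideal.Quotient.eq_zero_iff_dvd d (y u)
    rw [Subgroup.mem_subgroupOf, mem_congruenceSubgroup, hχ]
    simp only [mul_assoc, dvd_def]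
    exact exists_congr fun z ↦ ⟨hy_eq, fun h ↦ by rw [hy u, h]⟩
  have hsurj : Function.Surjective χ := fun v ↦ by
    obtain ⟨z, hz⟩ := Ideal.Quotient.mk_surjective v.toAdd
    obtain ⟨u, hu⟩ := isUnit_one_add_mul hc z
    refine ⟨⟨u, mem_congruenceSubgroup.2 ⟨z, hu⟩⟩, ?_⟩
    exact congrArg Multiplicative.ofAdd ((congrArg _ (hy_eq hu)).trans hz)
  rw [Subgroup.relIndex, hker, Subgroup.index_ker, MonoidHom.range_eq_top.2 hsurj]
  exact Subgroup.card_top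

theorem map_sq_congruenceSubgroup_four [HenselianLocalRing R] (h2 : (2 : R) ∈ maximalIdeal R) :
    (congruenceSubgroup (4 : R)).map (powMonoidHom 2) = congruenceSubgroup (4 * 2) := by
  ext u
  simp only [Subgroup.mem_map, mem_congruenceSubgroup]
  constructor
  · rintro ⟨v, ⟨y, hy⟩, rfl⟩
    refine ⟨y + 2 * y ^ 2, ?_⟩
    rw [powMonoidHom_apply, Units.val_pow_eq_pow_val, hy]
    ring
  · rintro ⟨y, hy⟩
    have hmonic : (X ^ 2 + X - C (2 * y) : R[X]).Monic := by monicity!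
    obtain ⟨z, hz, hz₀⟩ := HenselianLocalRing.is_henselian _ hmonic 0
      (by simpa using Ideal.mul_mem_right y _ h2) (by simp)
    replace hz : z ^ 2 + z - 2 * y = 0 := by simpa [IsRoot] using hz
    rw [sub_zero] at hz₀
    obtain ⟨w, hw⟩ := (by simpa using isUnit_one_add_mul hz₀ 1 : IsUnit (1 + z)).exists_right_inv
    obtain ⟨v, hv⟩ := isUnit_one_add_mul h2 z
    have hzw : z = 2 * (y * w) := by linear_combination -z * hw + w * hz
    refine ⟨v, ⟨y * w, by linear_combination hv + 2 * hzw⟩, Units.ext ?_⟩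
    rw [powMonoidHom_apply, Units.val_pow_eq_pow_val, hv, hy]
    linear_combination 4 * hz

theorem mem_ker_sq_units [IsDomain R] {u : Rˣ} :
    u ∈ (powMonoidHom 2 : Rˣ →* Rˣ).ker ↔ u = 1 ∨ u = -1 := by
  simp only [MonoidHom.mem_ker, powMonoidHom_apply, Units.ext_iff, Units.val_pow_eq_pow_val,
    Units.val_one, Units.val_neg, sq_eq_one_iff]

theorem card_ker_sq_units [IsDomain R] (h2 : (2 : R) ≠ 0) :
    Nat.card (powMonoidHom 2 : Rˣ →* Rˣ).ker = 2 := by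
  have hne : (1 : Rˣ) ≠ -1 := fun h ↦ h2 <| by
    rw [← one_add_one_eq_two, ← Units.val_one, add_eq_zero_iff_eq_neg, ← Units.val_neg, ← h]
  exact (Set.ncard_congr' (.setCongr (Set.ext fun _ ↦ mem_ker_sq_units))).trans
    (Set.ncard_pair hne)

theorem congruenceSubgroup_four_inf_ker_sq [IsDomain R] [IsLocalRing R] (h2₀ : (2 : R) ≠ 0)
    (h2 : (2 : R) ∈ maximalIdeal R) :
    congruenceSubgroup (4 : R) ⊓ (powMonoidHom 2 : Rˣ →* Rˣ).ker = ⊥ := by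
  refine eq_bot_iff.2 fun u ⟨h4, hu⟩ ↦ (mem_ker_sq_units.1 hu).resolve_right ?_
  rintro rfl
  obtain ⟨y, hy⟩ := mem_congruenceSubgroup.1 h4
  rw [Units.val_neg, Units.val_one] at hy
  have hzero : 2 * (1 + 2 * y) = 0 := by linear_combination -hy
  exact (mul_ne_zero h2₀ (isUnit_one_add_mul h2 y).ne_zero) hzero

theorem index_sq_units [IsDomain R] [HenselianLocalRing R] (h2₀ : (2 : R) ≠ 0)
    (h2 : (2 : R) ∈ maximalIdeal R) [Finite (R ⧸ Ideal.span {(2 : R)})] :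
    (powMonoidHom 2 : Rˣ →* Rˣ).range.index = 2 * Nat.card (R ⧸ Ideal.span {(2 : R)}) := by
  have h22 : (2 : R) * 2 = 4 := by norm_num
  have : Finite (R ⧸ Ideal.span {(4 : R)}) := by
    have := Ideal.finite_quotient_pow (Submodule.fg_span_singleton (2 : R)) 2
    rwa [Ideal.span_singleton_pow, sq, h22] at this
  have : (congruenceSubgroup (4 : R)).FiniteIndex := Subgroup.finiteIndex_ker _
  have hrel := relIndex_congruenceSubgroup_mul (h22 ▸ mul_ne_zero h2₀ h2₀)
    (h22 ▸ Ideal.mul_mem_right 2 _ h2) (Dvd.intro 2 h22)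
  have hmap := map_sq_congruenceSubgroup_four h2
  rw [index_range_eq_card_ker_mul_relIndex _ _ (congruenceSubgroup_four_inf_ker_sq h2₀ h2),
    card_ker_sq_units h2₀, hmap, hrel]
  rw [hmap]
  refine fun u hu ↦ mem_congruenceSubgroup.2 ?_
  obtain ⟨y, hy⟩ := mem_congruenceSubgroup.1 hu
  exact ⟨2 * y, by rw [hy, mul_assoc]⟩

end UnitSquares

section FieldSquares

theorem index_range_powMonoidHom_prod (G H : Type*) [CommGroup G] [CommGroup H] (n : ℕ) :
    (powMonoidHom n : G × H →* G × H).range.index =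
      (powMonoidHom n : G →* G).range.index * (powMonoidHom n : H →* H).range.index := by
  rw [← Subgroup.index_prod]
  congr 1
  ext ⟨x, y⟩
  simp [Subgroup.mem_prod, Prod.ext_iff]

theorem index_range_powMonoidHom_congr {G H : Type*} [CommGroup G] [CommGroup H] (e : G ≃* H)
    (n : ℕ) :
    (powMonoidHom n : G →* G).range.index = (powMonoidHom n : H →* H).range.index := by
  have hcomm : (e : G →* H).comp (powMonoidHom n) = (powMonoidHom n).comp e :=
    MonoidHom.ext fun x ↦ map_pow e x n
  have hrange : (e : G →* H).range = ⊤ := MonoidHom.range_eq_top.2 e.surjective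
  rw [← Subgroup.index_map_equiv _ e, MonoidHom.map_range, hcomm, ← MonoidHom.map_range, hrange,
    ← MonoidHom.range_eq_map]

theorem index_range_powMonoidHom_multiplicative_int (n : ℕ) :
    (powMonoidHom n : Multiplicative ℤ →* Multiplicative ℤ).range.index = n := by
  have hrange : (powMonoidHom n : Multiplicative ℤ →* Multiplicative ℤ).range =
      (AddSubgroup.zmultiples (n : ℤ)).toSubgroup := by
    ext x
    refine Multiplicative.exists.trans (exists_congr fun k ↦ ?_)
    change n • k = x.toAdd ↔ k • (n : ℤ) = x.toAdd
    rw [smul_eq_mul, nsmul_eq_mul, mul_comm]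
  rw [hrange, AddSubgroup.index_toSubgroup, Int.index_zmultiples, Int.natAbs_natCast]

theorem eq_zero_of_zpow_mul_unit_eq_one {R K : Type*} [CommRing R] [Field K] [Algebra R K]
    [FaithfulSMul R K] {ϖ : R} (hϖ : Irreducible ϖ) {k : ℤ} {u : Rˣ}
    (h : algebraMap R K ϖ ^ k * algebraMap R K u = 1) : k = 0 := by
  have hinj := FaithfulSMul.algebraMap_injective R K
  by_contra hk
  obtain ⟨n, rfl | rfl⟩ := k.eq_nat_or_neg
  · rw [zpow_natCast, ← map_pow, ← map_mul, ← map_one (algebraMap R K)] at h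
    exact hϖ.not_isUnit ((isUnit_pow_iff (by simpa using hk)).1 (.of_mul_eq_one _ (hinj h)))
  · have hu : ϖ ^ n = u := hinj <| by
      rw [map_pow, ← zpow_natCast, ← inv_eq_iff_eq_inv.2 (eq_inv_of_mul_eq_one_left h)]
      simp
    exact hϖ.not_isUnit ((isUnit_pow_iff (by simpa using hk)).1 (hu ▸ u.isUnit))

variable {R : Type*} (K : Type*) [CommRing R] [IsDomain R] [IsDiscreteValuationRing R] [Field K]
  [Algebra R K] [IsFractionRing R K]

/-- The isomorphism `(k, u) ↦ ϖ ^ k * u` determined by the choice of a uniformizer `ϖ`. -/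
noncomputable def zpowMulUnitsEquiv {ϖ : R} (hϖ : Irreducible ϖ) :
    Multiplicative ℤ × Rˣ ≃* Kˣ :=
  .ofBijective ((zpowersHom Kˣ (.mk0 (algebraMap R K ϖ) (by simpa using hϖ.ne_zero))).coprod
    (Units.map (algebraMap R K).toMonoidHom)) <| by
    constructor
    · rw [injective_iff_map_eq_one]
      rintro ⟨k, u⟩ h
      replace h : algebraMap R K ϖ ^ k.toAdd * algebraMap R K u = 1 := by
        simpa using congrArg Units.val h
      have hk := eq_zero_of_zpow_mul_unit_eq_one hϖ h
      rw [hk, zpow_zero, one_mul, map_eq_one_iff _ (IsFractionRing.injective R K)] at h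
      exact Prod.ext (toAdd_eq_zero.1 hk) (Units.ext h)
    · intro x
      obtain ⟨k, u, h⟩ :=
        IsDiscreteValuationRing.exists_units_eq_smul_zpow_of_irreducible hϖ x.ne_zero
      refine ⟨(.ofAdd k, u), Units.ext ?_⟩
      rw [h, Units.smul_def, Algebra.smul_def, mul_comm]
      simp

theorem index_range_powMonoidHom_units (n : ℕ) : (powMonoidHom n : Kˣ →* Kˣ).range.index =
    n * (powMonoidHom n : Rˣ →* Rˣ).range.index := by
  obtain ⟨ϖ, hϖ⟩ := IsDiscreteValuationRing.exists_irreducible R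
  rw [← index_range_powMonoidHom_congr (zpowMulUnitsEquiv K hϖ), index_range_powMonoidHom_prod,
    index_range_powMonoidHom_multiplicative_int]

end FieldSquares

theorem index_range_sq_units_of_finiteDimensional_padic (E : Type*) [Field E] [Algebra ℚ_[2] E]
    [FiniteDimensional ℚ_[2] E] :
    (powMonoidHom 2 : Eˣ →* Eˣ).range.index = 2 ^ (Module.finrank ℚ_[2] E + 2) := by
  let : Algebra ℤ_[2] E := .compHom E (algebraMap ℤ_[2] ℚ_[2])
  have : IsScalarTower ℤ_[2] ℚ_[2] E := .of_algebraMap_eq fun _ ↦ rfl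
  let O := integralClosure ℤ_[2] E
  have := IsIntegralClosure.isFractionRing_of_finite_extension ℤ_[2] ℚ_[2] E O
  have := isDiscreteValuationRing_of_isIntegralClosure 2 E O
  have := henselianLocalRing_of_isIntegralClosure 2 E O
  have hcard := natCard_quotient_span_of_isIntegralClosure 2 E O
  have h2 := natCast_mem_maximalIdeal_of_isIntegralClosure 2 E O
  rw [Nat.cast_two] at hcard h2
  have : Finite (O ⧸ Ideal.span {(2 : O)}) :=
    Nat.finite_of_card_ne_zero (hcard ▸ pow_ne_zero _ two_ne_zero)
  have : CharZero E := charZero_of_injective_algebraMap (algebraMap ℚ_[2] E).injective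
  rw [index_range_powMonoidHom_units (R := O), index_sq_units two_ne_zero h2, hcard]
  ring

section UnramifiedExtension

theorem adjoin_simple_eq_top_of_forall_aut {F M : Type*} [Field F] [Field M] [Algebra F M]
    [FiniteDimensional F M] [IsGalois F M] {x : M} (h : ∀ σ : M ≃ₐ[F] M, σ x = x → σ = 1) :
    F⟮x⟯ = ⊤ := by
  refine (Field.primitive_element_iff_algHom_eq_of_eval F M
    (fun y ↦ Normal.splits inferInstance y) x (AlgHom.id F M)).2 fun ψ hψ ↦ ?_
  have hσ := h (algEquivEquivAlgHom F M |>.symm ψ) hψ.symm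
  rw [← (algEquivEquivAlgHom F M).apply_symm_apply ψ, hσ, map_one]
  rfl

theorem isCyclotomicExtension_singleton_of_adjoin_simple_eq_top {F M : Type*} [Field F] [Field M]
    [Algebra F M] [Algebra.IsIntegral F M] {n : ℕ} [NeZero n] {ζ : M} (hζ : IsPrimitiveRoot ζ n)
    (htop : F⟮ζ⟯ = ⊤) : IsCyclotomicExtension {n} F M := by
  have := hζ.intermediateField_adjoin_isCyclotomicExtension F
  exact .equiv {n} F F⟮ζ⟯ ((equivOfEq htop).trans topEquiv)

variable {A F M : Type*} (B : Type*)
  [CommRing A] [IsDomain A] [IsIntegrallyClosed A] [IsLocalRing A]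
  [Field F] [Algebra A F] [IsFractionRing A F] [Field M] [Algebra F M] [Algebra A M]
  [IsScalarTower A F M] [CommRing B] [IsDomain B] [HenselianLocalRing B] [Finite (ResidueField B)]
  [Algebra A B] [IsLocalHom (algebraMap A B)] [Algebra B M] [IsScalarTower A B M]
  [IsIntegralClosure B A M] [FiniteDimensional F M] [IsGalois F M]

theorem isCyclotomicExtension_of_prime_finrank [FaithfulSMul A B] [ValuationRing B]
    (hℓ : (Module.finrank F M).Prime) (hk : (Module.finrank F M : ResidueField B) ≠ 0)
    (hF : ¬ ∃ ζ : F, IsPrimitiveRoot ζ (Module.finrank F M)) :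
    IsCyclotomicExtension {Nat.card (ResidueField A) ^ Module.finrank F M - 1} F M := by
  have := IsIntegralClosure.isFractionRing_of_finite_extension A F M B
  have := Algebra.isInvariant_of_isGalois' A F M B
  have : Finite (ResidueField A) :=
    .of_injective _ (algebraMap (ResidueField A) (ResidueField B)).injective
  have : Finite (B ≃ₐ[A] B) := .of_equiv _ (galRestrict A F M B).toEquiv
  rw [← IsGalois.card_aut_eq_finrank, Nat.card_congr (galRestrict A F M B).toEquiv] at hℓ hk hF ⊢
  have := faithfulSMul_residueField_of_card_prime hℓ hk fun ⟨ζ, hζ⟩ ↦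
    hF ⟨_, hζ.map_of_injective (IsFractionRing.injective A F)⟩
  obtain ⟨ζ, hζ, hstab⟩ :=
    exists_isPrimitiveRoot_of_faithfulSMul_residueField (A := A) (B := B) (G := B ≃ₐ[A] B)
  have : NeZero (Nat.card (ResidueField A) ^ Nat.card (B ≃ₐ[A] B) - 1) :=
    ⟨Nat.sub_ne_zero_of_lt (Nat.one_lt_pow hℓ.ne_zero Finite.one_lt_card)⟩
  have hinj := IsIntegralClosure.algebraMap_injective B A M
  refine isCyclotomicExtension_singleton_of_adjoin_simple_eq_top (hζ.map_of_injective hinj)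
    (adjoin_simple_eq_top_of_forall_aut fun σ hσ ↦ ?_)
  rw [← algebraMap_galRestrict_apply A] at hσ
  exact (galRestrict A F M B).map_eq_one_iff.1 (hstab _ (hinj hσ))

variable (A) in
include B in
theorem finrank_of_isCyclotomicExtension_card_pow_sub_one {n : ℕ} (hn : n ≠ 0)
    [IsCyclotomicExtension {Nat.card (ResidueField A) ^ n - 1} F M] : Module.finrank F M = n := by
  have := IsIntegralClosure.isFractionRing_of_finite_extension A F M B
  have := Algebra.isInvariant_of_isGalois' A F M B
  have : Finite (ResidueField A) :=
    .of_injective _ (algebraMap (ResidueField A) (ResidueField B)).injective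
  have : Finite (B ≃ₐ[A] B) := .of_equiv _ (galRestrict A F M B).toEquiv
  have hN : Nat.card (ResidueField A) ^ n - 1 ≠ 0 :=
    Nat.sub_ne_zero_of_lt (Nat.one_lt_pow hn Finite.one_lt_card)
  have hinj := IsIntegralClosure.algebraMap_injective B A M
  obtain ⟨ζ, hζ⟩ := IsCyclotomicExtension.exists_isPrimitiveRoot F M
    (Set.mem_singleton (Nat.card (ResidueField A) ^ n - 1)) hN
  have hint : IsIntegral A ζ := (hζ.isIntegral (Nat.pos_of_ne_zero hN)).tower_top
  obtain ⟨ζ, rfl⟩ := (IsIntegralClosure.isIntegral_iff (A := B)).1 hint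
  replace hζ := IsPrimitiveRoot.of_map_of_injective hζ hinj
  have hstab (g : B ≃ₐ[A] B) (hg : g • ζ = ζ) : g = 1 := by
    rw [← (galRestrict A F M B).symm.map_eq_one_iff]
    refine IsCyclotomicExtension.algEquiv_eq_of_apply_eq
      {Nat.card (ResidueField A) ^ n - 1} F M ?_
    rintro _ rfl -
    refine ⟨_, hζ.map_of_injective hinj, ?_⟩
    rw [galRestrict_symm_algebraMap_apply]
    exact congrArg _ hg
  rw [← IsGalois.card_aut_eq_finrank, Nat.card_congr (galRestrict A F M B).toEquiv]
  exact (card_le_of_isPrimitiveRoot hn hζ hstab).antisymm (le_card_of_isPrimitiveRoot hn hζ hstab)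

end UnramifiedExtension

theorem isIntegralClosure_of_isIntegral {R B L : Type*} (A : Type*) [CommRing R] [CommRing A]
    [CommRing B] [CommRing L] [Algebra R A] [Algebra R L] [Algebra A L] [IsScalarTower R A L]
    [Algebra B L] [Algebra.IsIntegral R A] [IsIntegralClosure B A L] : IsIntegralClosure B R L where
  algebraMap_injective := IsIntegralClosure.algebraMap_injective B A L
  isIntegral_iff {x} := by
    rw [← IsIntegralClosure.isIntegral_iff (R := A)]
    exact ⟨IsIntegral.tower_top, isIntegral_trans x⟩

section PadicUnramifiedExtension

variable (p : ℕ) [Fact p.Prime] {F : Type*} [Field F] [Algebra ℚ_[p] F] [FiniteDimensional ℚ_[p] F]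

section

variable [Algebra ℤ_[p] F] [IsScalarTower ℤ_[p] ℚ_[p] F] (A M : Type*) [CommRing A] [Algebra A F]
  [Algebra ℤ_[p] A] [IsScalarTower ℤ_[p] A F] [IsIntegralClosure A ℤ_[p] F] [Field M]
  [Algebra F M] [FiniteDimensional F M]

variable (F) in
include F in
theorem isLocalRing_integralClosure_of_finiteDimensional_padic [Algebra A M] [IsScalarTower A F M] :
    ∃ _ : HenselianLocalRing (integralClosure A M), ValuationRing (integralClosure A M) ∧
      Finite (ResidueField (integralClosure A M)) ∧
      (p : ResidueField (integralClosure A M)) = 0 := by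
  let _ : Algebra ℚ_[p] M := .compHom M (algebraMap ℚ_[p] F)
  have : IsScalarTower ℚ_[p] F M := .of_algebraMap_eq fun _ ↦ rfl
  let _ : Algebra ℤ_[p] M := .compHom M (algebraMap ℤ_[p] F)
  have : IsScalarTower ℤ_[p] F M := .of_algebraMap_eq fun _ ↦ rfl
  have : IsScalarTower ℤ_[p] ℚ_[p] M := .to₁₂₄ ℤ_[p] ℚ_[p] F M
  have : IsScalarTower ℤ_[p] A M := .to₁₂₄ ℤ_[p] A F M
  have : FiniteDimensional ℚ_[p] M := .trans ℚ_[p] F M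
  have := IsIntegralClosure.isIntegral_algebra ℤ_[p] F (A := A)
  have : IsIntegralClosure (integralClosure A M) ℤ_[p] M := isIntegralClosure_of_isIntegral A
  have := henselianLocalRing_of_isIntegralClosure p M (integralClosure A M)
  refine ⟨this, valuationRing_of_isIntegralClosure p M _,
    finite_residueField_of_isIntegralClosure p M _, ?_⟩
  rw [← map_natCast (residue (integralClosure A M)), residue_eq_zero_iff]
  exact natCast_mem_maximalIdeal_of_isIntegralClosure p M _

variable {M} [IsDomain A] [IsLocalRing A]

theorem isCyclotomicExtension_of_prime_finrank_of_ne [IsGalois F M]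
    (hℓ : (Module.finrank F M).Prime) (hp : Module.finrank F M ≠ p)
    (hF : ¬ ∃ ζ : F, IsPrimitiveRoot ζ (Module.finrank F M)) :
    IsCyclotomicExtension {Nat.card (ResidueField A) ^ Module.finrank F M - 1} F M := by
  let _ : Algebra A M := .compHom M (algebraMap A F)
  have : IsScalarTower A F M := .of_algebraMap_eq fun _ ↦ rfl
  obtain ⟨_, _, _, hpB⟩ := isLocalRing_integralClosure_of_finiteDimensional_padic p F A M
  have := valuationRing_of_isIntegralClosure p F A
  have := IsIntegralClosure.isFractionRing_of_finite_extension ℤ_[p] ℚ_[p] F A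
  have : FaithfulSMul A M := .trans A F M
  refine isCyclotomicExtension_of_prime_finrank (integralClosure A M) hℓ (fun h ↦ ?_) hF
  have hcop : (Module.finrank F M).Coprime p := (Nat.coprime_primes hℓ Fact.out).2 hp
  have := hcop.cast (R := ResidueField (integralClosure A M))
  rw [h, hpB] at this
  exact not_isCoprime_zero_zero this

include p in
theorem finrank_of_isCyclotomicExtension_card_residueField_pow_sub_one {n : ℕ} (hn : n ≠ 0)
    [IsCyclotomicExtension {Nat.card (ResidueField A) ^ n - 1} F M] : Module.finrank F M = n := by
  let _ : Algebra A M := .compHom M (algebraMap A F)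
  have : IsScalarTower A F M := .of_algebraMap_eq fun _ ↦ rfl
  obtain ⟨_, _, _, -⟩ := isLocalRing_integralClosure_of_finiteDimensional_padic p F A M
  have := valuationRing_of_isIntegralClosure p F A
  have := IsIntegralClosure.isFractionRing_of_finite_extension ℤ_[p] ℚ_[p] F A
  have : FaithfulSMul A M := .trans A F M
  have := IsCyclotomicExtension.isGalois {Nat.card (ResidueField A) ^ n - 1} F M
  exact finrank_of_isCyclotomicExtension_card_pow_sub_one A (integralClosure A M) hn

end

theorem existsUnique_isGalois_finrank_eq_prime {ℓ : ℕ} (hℓ : ℓ.Prime) (hp : ℓ ≠ p)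
    (hF : ¬ ∃ ζ : F, IsPrimitiveRoot ζ ℓ) :
    ∃! L : IntermediateField F (AlgebraicClosure F), IsGalois F L ∧ Module.finrank F L = ℓ := by
  let _ : Algebra ℤ_[p] F := .compHom F (algebraMap ℤ_[p] ℚ_[p])
  have : IsScalarTower ℤ_[p] ℚ_[p] F := .of_algebraMap_eq fun _ ↦ rfl
  let A := integralClosure ℤ_[p] F
  have := henselianLocalRing_of_isIntegralClosure p F A
  have := finite_residueField_of_isIntegralClosure p F A
  have : CharZero F := charZero_of_injective_algebraMap (algebraMap ℚ_[p] F).injective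
  let N := Nat.card (ResidueField A) ^ ℓ - 1
  have : NeZero N := ⟨Nat.sub_ne_zero_of_lt (Nat.one_lt_pow hℓ.ne_zero Finite.one_lt_card)⟩
  have hcyc (L : IntermediateField F (AlgebraicClosure F)) [IsGalois F L]
      (hL : Module.finrank F L = ℓ) : IsCyclotomicExtension {N} F L := by
    have : FiniteDimensional F L := .of_finrank_pos (hL ▸ hℓ.pos)
    subst hL
    exact isCyclotomicExtension_of_prime_finrank_of_ne p A hℓ hp hF
  obtain ⟨ζ, hζ⟩ := HasEnoughRootsOfUnity.exists_primitiveRoot (AlgebraicClosure F) N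
  have := hζ.intermediateField_adjoin_isCyclotomicExtension F
  have := IsCyclotomicExtension.finiteDimensional {N} F F⟮ζ⟯
  have := IsCyclotomicExtension.isGalois {N} F F⟮ζ⟯
  have hrank := finrank_of_isCyclotomicExtension_card_residueField_pow_sub_one p A hℓ.ne_zero
    (F := F) (M := F⟮ζ⟯)
  refine ⟨F⟮ζ⟯, ⟨this, hrank⟩, fun L ⟨_, hL⟩ ↦ ?_⟩
  have := hcyc L hL
  exact isCyclotomicExtension_eq {N} F _ L F⟮ζ⟯

end PadicUnramifiedExtension

section SquareClasses

/-- The group `Kˣ / (Kˣ)²` of square classes of a field `K`. By Kummer theory it classifies the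
quadratic extensions of `K`. -/
abbrev SquareClassGroup (K : Type*) [Field K] : Type _ :=
  Kˣ ⧸ (powMonoidHom 2 : Kˣ →* Kˣ).range

namespace SquareClassGroup

variable {F L K : Type*} [Field F] [Field L] [Field K]

theorem mk_eq_one_iff {a : Kˣ} : (a : SquareClassGroup K) = 1 ↔ IsSquare (a : K) := by
  rw [QuotientGroup.eq_one_iff]
  refine ⟨fun ⟨b, hb⟩ ↦ ⟨b, ?_⟩, fun ⟨b, hb⟩ ↦ ?_⟩
  · rw [← hb, powMonoidHom_apply, pow_two, Units.val_mul]
  · have hb0 : b ≠ 0 := fun h ↦ a.ne_zero (by rw [hb, h, mul_zero])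
    exact ⟨Units.mk0 b hb0, Units.ext (by rw [powMonoidHom_apply, pow_two]; exact hb.symm)⟩

theorem sq_eq_one (c : SquareClassGroup K) : c ^ 2 = 1 := by
  obtain ⟨a, rfl⟩ := QuotientGroup.mk_surjective c
  exact (QuotientGroup.eq_one_iff _).2 ⟨a, rfl⟩

theorem pow_eq_self_of_odd {n : ℕ} (hn : Odd n) (c : SquareClassGroup K) : c ^ n = c := by
  obtain ⟨k, rfl⟩ := hn
  rw [pow_succ, pow_mul, sq_eq_one, one_pow, one_mul]

/-- The homomorphism of square classes induced by a homomorphism of unit groups, such as an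
embedding of fields or a norm. -/
def map (f : Lˣ →* Kˣ) : SquareClassGroup L →* SquareClassGroup K :=
  QuotientGroup.map _ _ f <| by
    rintro _ ⟨x, rfl⟩
    exact ⟨f x, (map_pow f x 2).symm⟩

variable (F L) [Algebra F L]

/-- The map `Fˣ / (Fˣ)² → Lˣ / (Lˣ)²` induced by a field extension `L / F`. Its kernel consists of
the square classes of `F` that become squares in `L`. -/
def baseChange : SquareClassGroup F →* SquareClassGroup L :=
  map (Units.map (algebraMap F L))

/-- The norm map `Lˣ / (Lˣ)² → Fˣ / (Fˣ)²` of a field extension `L / F`. -/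
noncomputable def norm : SquareClassGroup L →* SquareClassGroup F :=
  map (Units.map (Algebra.norm F))

/-- The action of the automorphism `σ` of `L / F` on `Lˣ / (Lˣ)²`. -/
def conj {F L : Type*} [Field F] [Field L] [Algebra F L] (σ : L ≃ₐ[F] L) :
    SquareClassGroup L →* SquareClassGroup L :=
  map (Units.map σ)

variable {F L}

theorem mk_mem_ker_baseChange_iff {a : Fˣ} :
    (a : SquareClassGroup F) ∈ (baseChange F L).ker ↔ IsSquare (algebraMap F L a) :=
  mk_eq_one_iff

theorem baseChange_baseChange [Algebra F K] [Algebra L K] [IsScalarTower F L K]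
    (c : SquareClassGroup F) :
    baseChange L K (baseChange F L c) = baseChange F K c := by
  obtain ⟨a, rfl⟩ := QuotientGroup.mk_surjective c
  exact congrArg QuotientGroup.mk (Units.ext (IsScalarTower.algebraMap_apply F L K _).symm)

theorem norm_baseChange (c : SquareClassGroup F) :
    norm F L (baseChange F L c) = c ^ Module.finrank F L := by
  obtain ⟨a, rfl⟩ := QuotientGroup.mk_surjective c
  refine congrArg QuotientGroup.mk (Units.ext ?_)
  exact Algebra.norm_algebraMap _

theorem norm_conj (σ : L ≃ₐ[F] L) (c : SquareClassGroup L) : norm F L (conj σ c) = norm F L c := by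
  obtain ⟨a, rfl⟩ := QuotientGroup.mk_surjective c
  refine congrArg QuotientGroup.mk (Units.ext ?_)
  exact Algebra.norm_eq_of_algEquiv _ _

theorem conj_eq_one_iff (σ : L ≃ₐ[F] L) {c : SquareClassGroup L} : conj σ c = 1 ↔ c = 1 := by
  obtain ⟨a, rfl⟩ := QuotientGroup.mk_surjective c
  refine mk_eq_one_iff.trans (Iff.trans ⟨fun h ↦ ?_, fun h ↦ h.map σ⟩ mk_eq_one_iff.symm)
  have h' := h.map σ.symm
  rwa [Units.coe_map, MonoidHom.coe_coe, AlgEquiv.symm_apply_apply] at h'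

theorem baseChange_norm [FiniteDimensional F L] [IsGalois F L] (c : SquareClassGroup L) :
    baseChange F L (norm F L c) = ∏ σ : L ≃ₐ[F] L, conj σ c := by
  obtain ⟨a, rfl⟩ := QuotientGroup.mk_surjective c
  have hnorm : Units.map (algebraMap F L : F →* L) (Units.map (Algebra.norm F) a) =
      ∏ σ : L ≃ₐ[F] L, Units.map (σ : L →* L) a := by
    ext
    rw [Units.coe_prod]
    exact Algebra.norm_eq_prod_automorphisms F (a : L)
  exact (congrArg QuotientGroup.mk hnorm).trans (map_prod (QuotientGroup.mk' _) _ _)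

theorem card_ker_norm_mul_card (h : Odd (Module.finrank F L)) :
    Nat.card (norm F L).ker * Nat.card (SquareClassGroup F) = Nat.card (SquareClassGroup L) := by
  have hsurj : Function.Surjective (norm F L) := fun c ↦
    ⟨baseChange F L c, by rw [norm_baseChange, pow_eq_self_of_odd h]⟩
  rw [← Subgroup.card_mul_index (norm F L).ker, Subgroup.index_ker,
    MonoidHom.range_eq_top.2 hsurj, Subgroup.card_top]

theorem exists_conj_ne [FiniteDimensional F L] [IsGalois F L] (h : Odd (Module.finrank F L))
    {c : SquareClassGroup L} (hc : c ≠ 1) (hnorm : norm F L c = 1) :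
    ∃ σ : L ≃ₐ[F] L, conj σ c ≠ c := by
  by_contra! hfix
  apply hc
  calc c = c ^ Module.finrank F L := (pow_eq_self_of_odd h c).symm
    _ = ∏ σ : L ≃ₐ[F] L, conj σ c := by
      simp only [hfix, Finset.prod_const, Finset.card_univ, ← Nat.card_eq_fintype_card,
        IsGalois.card_aut_eq_finrank]
    _ = 1 := by rw [← baseChange_norm, hnorm, map_one]

theorem ker_baseChange_eq_bot_of_le_ker_norm [Algebra F K] [Algebra L K] [IsScalarTower F L K]
    (h : Odd (Module.finrank F L))
    (hle : (baseChange L K).ker ≤ (norm F L).ker) : (baseChange F K).ker = ⊥ := by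
  rw [eq_bot_iff]
  intro c hc
  rw [MonoidHom.mem_ker, ← baseChange_baseChange (L := L)] at hc
  have hc' : norm F L (baseChange F L c) = 1 := hle hc
  rwa [norm_baseChange, pow_eq_self_of_odd h] at hc'

section Tower

variable [Algebra F K] [Algebra L K] [IsScalarTower F L K] [IsGalois F L] [Normal F K]

theorem conj_mem_ker_baseChange (σ : L ≃ₐ[F] L) {c : SquareClassGroup L}
    (hc : c ∈ (baseChange L K).ker) : conj σ c ∈ (baseChange L K).ker := by
  obtain ⟨a, rfl⟩ := QuotientGroup.mk_surjective c
  obtain ⟨τ, rfl⟩ := AlgEquiv.restrictNormalHom_surjective (F := F) (K₁ := L) K σ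
  rw [mk_mem_ker_baseChange_iff] at hc
  refine mk_mem_ker_baseChange_iff.2 ?_
  have := hc.map τ
  rwa [← AlgEquiv.restrictNormal_commutes] at this

theorem norm_mem_ker_baseChange [FiniteDimensional F L] {c : SquareClassGroup L}
    (hc : c ∈ (baseChange L K).ker) : norm F L c ∈ (baseChange F K).ker := by
  rw [MonoidHom.mem_ker, ← baseChange_baseChange (L := L), baseChange_norm, map_prod]
  exact Finset.prod_eq_one fun σ _ ↦ conj_mem_ker_baseChange σ hc

end Tower

end SquareClassGroup

end SquareClasses

section Kummer

variable {L K : Type*} [Field L] [Field K] [Algebra L K]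

theorem algEquiv_apply_eq_or_eq_neg_of_sq_eq {a : L} {b : K} (hb : b ^ 2 = algebraMap L K a)
    (g : K ≃ₐ[L] K) : g b = b ∨ g b = -b := by
  rw [← sq_eq_sq_iff_eq_or_eq_neg, ← map_pow, hb, AlgEquiv.commutes]

open Classical in
/-- The Kummer character of `Gal(K/L)` attached to a square root `b` in `K` of an element `a` of
`L`: it sends `g` to the sign `±1` with `g b = ± b`. -/
noncomputable def kummerChar {a : L} {b : K} (hb : b ^ 2 = algebraMap L K a) :
    (K ≃ₐ[L] K) →* ℤˣ where
  toFun g := if g b = b then 1 else -1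
  map_one' := if_pos rfl
  map_mul' g h := by
    by_cases hneg : -b = b
    · have hfix (g : K ≃ₐ[L] K) : g b = b := by
        simpa only [hneg, or_self] using algEquiv_apply_eq_or_eq_neg_of_sq_eq hb g
      simp only [hfix, if_true, mul_one]
    · rcases algEquiv_apply_eq_or_eq_neg_of_sq_eq hb g with hg | hg <;>
        rcases algEquiv_apply_eq_or_eq_neg_of_sq_eq hb h with hh | hh <;>
        simp [AlgEquiv.mul_apply, hg, hh, hneg]

open Classical in
theorem kummerChar_apply {a : L} {b : K} (hb : b ^ 2 = algebraMap L K a) (g : K ≃ₐ[L] K) :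
    kummerChar hb g = if g b = b then 1 else -1 := rfl

theorem kummerChar_eq_one_iff {a : L} {b : K} (hb : b ^ 2 = algebraMap L K a) {g : K ≃ₐ[L] K} :
    kummerChar hb g = 1 ↔ g b = b := by
  simp [kummerChar_apply]

theorem apply_eq_kummerChar_mul {a : L} {b : K} (hb : b ^ 2 = algebraMap L K a) (g : K ≃ₐ[L] K) :
    g b = ((kummerChar hb g : ℤ) : K) * b := by
  rcases Int.units_eq_one_or (kummerChar hb g) with hg | hg
  · rw [hg, Units.val_one, Int.cast_one, one_mul, (kummerChar_eq_one_iff hb).1 hg]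
  · have hne : g b ≠ b := fun h ↦ by simp [(kummerChar_eq_one_iff hb).2 h] at hg
    simpa [hg] using (algEquiv_apply_eq_or_eq_neg_of_sq_eq hb g).resolve_left hne

theorem ne_zero_of_sq_eq_algebraMap_unit {a : Lˣ} {b : K} (hb : b ^ 2 = algebraMap L K a) :
    b ≠ 0 := by
  rintro rfl
  rw [zero_pow two_ne_zero, eq_comm, map_eq_zero] at hb
  exact a.ne_zero hb

variable [NeZero (2 : K)]

theorem eq_of_units_int_cast_mul_eq {u v : ℤˣ} {b : K} (hb : b ≠ 0)
    (h : ((u : ℤ) : K) * b = ((v : ℤ) : K) * b) : u = v := by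
  have h2 : (2 : K) ≠ 0 := NeZero.ne 2
  have hneg : -b ≠ b := fun h ↦ by grind
  rcases Int.units_eq_one_or u with rfl | rfl <;> rcases Int.units_eq_one_or v with rfl | rfl
  · rfl
  · simp_all [eq_comm]
  · simp_all
  · rfl

variable [FiniteDimensional L K] [IsGalois L K]

theorem exists_kummerChar_eq (χ : (K ≃ₐ[L] K) →* ℤˣ) :
    ∃ (a : Lˣ) (b : K) (hb : b ^ 2 = algebraMap L K a), kummerChar hb = χ := by
  obtain ⟨b, hb⟩ :=
    groupCohomology.isMulCoboundary₁_of_isMulCocycle₁_of_aut_to_units (K := L) (L := K)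
      (fun g ↦ Units.map (Int.castRingHom K) (χ g)) fun g h ↦ by
        ext
        simp [mul_comm]
  have hχ (g : K ≃ₐ[L] K) : g b = ((χ g : ℤ) : K) * b := by
    simpa using congrArg Units.val (div_eq_iff_eq_mul.1 (hb g))
  obtain ⟨a, ha⟩ : (b : K) ^ 2 ∈ Set.range (algebraMap L K) := by
    rw [IsGalois.mem_range_algebraMap_iff_fixed]
    intro g
    rw [map_pow, hχ, mul_pow, ← Int.cast_pow, ← Units.val_pow_eq_pow_val, Int.units_sq,
      Units.val_one, Int.cast_one, one_mul]
  have ha0 : a ≠ 0 := by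
    rintro rfl
    exact pow_ne_zero 2 b.ne_zero (by rw [← ha, map_zero])
  have hb' : (b : K) ^ 2 = algebraMap L K (Units.mk0 a ha0) := ha.symm
  refine ⟨Units.mk0 a ha0, b, hb', MonoidHom.ext fun g ↦ ?_⟩
  exact eq_of_units_int_cast_mul_eq b.ne_zero (by rw [← apply_eq_kummerChar_mul hb', hχ])

theorem kummerChar_eq_iff_div_mem_range {a a' : Lˣ} {b b' : K}
    (hb : b ^ 2 = algebraMap L K a) (hb' : b' ^ 2 = algebraMap L K a') :
    kummerChar hb = kummerChar hb' ↔ b / b' ∈ Set.range (algebraMap L K) := by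
  have hb0 := ne_zero_of_sq_eq_algebraMap_unit hb
  have hb0' := ne_zero_of_sq_eq_algebraMap_unit hb'
  rw [IsGalois.mem_range_algebraMap_iff_fixed, MonoidHom.ext_iff]
  refine forall_congr' fun g ↦ ?_
  rw [map_div₀, div_eq_div_iff ((map_ne_zero g).2 hb0') hb0', apply_eq_kummerChar_mul hb,
    apply_eq_kummerChar_mul hb', mul_assoc, mul_left_comm b]
  exact ⟨fun h ↦ by rw [h], eq_of_units_int_cast_mul_eq (mul_ne_zero hb0 hb0')⟩

theorem kummerChar_eq_iff {a a' : Lˣ} {b b' : K} (hb : b ^ 2 = algebraMap L K a)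
    (hb' : b' ^ 2 = algebraMap L K a') :
    kummerChar hb = kummerChar hb' ↔ (a : SquareClassGroup L) = a' := by
  have hsq : (b / b') ^ 2 = algebraMap L K ((a / a' : Lˣ) : L) := by
    rw [div_pow, hb, hb', Units.val_div_eq_div_val, map_div₀]
  rw [kummerChar_eq_iff_div_mem_range, ← div_eq_one (a := (a : SquareClassGroup L)),
    ← QuotientGroup.mk_div, SquareClassGroup.mk_eq_one_iff]
  constructor
  · rintro ⟨x, hx⟩
    refine ⟨x, (algebraMap L K).injective ?_⟩
    rw [← hsq, ← hx, map_mul, pow_two]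
  · rintro ⟨x, hx⟩
    rw [hx, map_mul, ← pow_two, sq_eq_sq_iff_eq_or_eq_neg] at hsq
    rcases hsq with h | h
    · exact ⟨x, h.symm⟩
    · exact ⟨-x, by rw [map_neg, h]⟩

theorem card_ker_baseChange :
    Nat.card (SquareClassGroup.baseChange L K).ker = Nat.card ((K ≃ₐ[L] K) →* ℤˣ) := by
  have hroot (c : (SquareClassGroup.baseChange L K).ker) :
      ∃ (a : Lˣ) (b : K), b ^ 2 = algebraMap L K a ∧ (a : SquareClassGroup L) = c := by
    obtain ⟨a, ha⟩ := QuotientGroup.mk_surjective c.1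
    obtain ⟨b, hb⟩ := SquareClassGroup.mk_mem_ker_baseChange_iff.1 (ha ▸ c.2)
    exact ⟨a, b, by rw [hb, pow_two], ha⟩
  choose a b hb ha using hroot
  refine Nat.card_congr (Equiv.ofBijective (fun c ↦ kummerChar (hb c))
    ⟨fun c c' h ↦ ?_, fun χ ↦ ?_⟩)
  · rw [kummerChar_eq_iff, ha, ha] at h
    exact Subtype.ext h
  · obtain ⟨a', b', hb', rfl⟩ := exists_kummerChar_eq χ
    have hmem : (a' : SquareClassGroup L) ∈ (SquareClassGroup.baseChange L K).ker :=
      SquareClassGroup.mk_mem_ker_baseChange_iff.2 ⟨b', by rw [← hb', pow_two]⟩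
    exact ⟨⟨_, hmem⟩, by rw [kummerChar_eq_iff, ha]⟩

theorem ker_baseChange_eq_bot [Subsingleton ((K ≃ₐ[L] K) →* ℤˣ)] :
    (SquareClassGroup.baseChange L K).ker = ⊥ := by
  rw [Subgroup.eq_bot_iff_card, card_ker_baseChange, Nat.card_eq_one_iff_unique]
  exact ⟨inferInstance, ⟨1⟩⟩

end Kummer

section SignCharacters

variable {G : Type*} [Group G]

theorem card_monoidHom_units_int_of_forall_sq_eq_one [Finite G] (h : ∀ g : G, g ^ 2 = 1) :
    Nat.card (G →* ℤˣ) = Nat.card G := by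
  let _ : CommGroup G :=
    { ‹Group G› with
      mul_comm a b :=
        (Commute.of_orderOf_dvd_two (fun g ↦ orderOf_dvd_of_pow_eq_one (h g)) a b).eq }
  have hexp : Monoid.exponent G ∣ 2 := Monoid.exponent_dvd_of_forall_pow_eq_one h
  have htwo : HasEnoughRootsOfUnity ℤ 2 :=
    ⟨⟨-1, IsPrimitiveRoot.neg_one 0 (by norm_num)⟩, inferInstance⟩
  have : HasEnoughRootsOfUnity ℤ (Monoid.exponent G) := htwo.of_dvd ℤ hexp
  exact CommGroup.card_monoidHom_of_hasEnoughRootsOfUnity G ℤ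

theorem index_ne_two_of_subsingleton_monoidHom [Subsingleton (G →* ℤˣ)] (H : Subgroup G) :
    H.index ≠ 2 := by
  intro hH
  have : H.Normal := Subgroup.normal_of_index_eq_two hH
  have : Fact (Nat.Prime 2) := ⟨Nat.prime_two⟩
  let e : G ⧸ H ≃* ℤˣ := mulEquivOfPrimeCardEq (p := 2) hH (by simp)
  obtain ⟨g, hg⟩ := (e.surjective.comp (QuotientGroup.mk'_surjective H)) (-1)
  have : (e.toMonoidHom.comp (QuotientGroup.mk' H)) g = 1 := by
    rw [Subsingleton.elim (e.toMonoidHom.comp (QuotientGroup.mk' H)) 1, MonoidHom.one_apply]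
  exact absurd (hg.symm.trans this) (by decide)

theorem not_normal_of_index_eq_four [Subsingleton (G →* ℤˣ)] {P : Subgroup G} (hP : P.index = 4) :
    ¬ P.Normal := by
  intro hnormal
  have hcard : Nat.card (G ⧸ P) = 4 := hP
  have : Finite (G ⧸ P) := Nat.finite_of_card_ne_zero (by lia)
  have : Fact (Nat.Prime 2) := ⟨Nat.prime_two⟩
  obtain ⟨H, hH⟩ := Sylow.exists_subgroup_card_pow_prime (G := G ⧸ P) 2 (n := 1)
    (by rw [hcard]; norm_num)
  apply index_ne_two_of_subsingleton_monoidHom (H.comap (QuotientGroup.mk' P))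
  rw [Subgroup.index_comap_of_surjective _ (QuotientGroup.mk'_surjective P)]
  have := H.card_mul_index
  lia

end SignCharacters

section AlternatingGroupFour

theorem card_alternatingGroup_four : Nat.card (alternatingGroup (Fin 4)) = 12 := by
  rw [Nat.card_eq_fintype_card]
  decide

theorem sq_eq_one_of_pow_four_eq_one_alternatingGroup_four :
    ∀ g : alternatingGroup (Fin 4), g ^ 4 = 1 → g ^ 2 = 1 := by
  decide

set_option maxRecDepth 10000 in
theorem exists_eq_sq_mul_sq_alternatingGroup_four :
    ∀ g : alternatingGroup (Fin 4), ∃ x y, g = x ^ 2 * y ^ 2 := by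
  decide

instance subsingleton_monoidHom_alternatingGroup_four :
    Subsingleton (alternatingGroup (Fin 4) →* ℤˣ) := by
  refine subsingleton_of_forall_eq 1 fun χ ↦ MonoidHom.ext fun g ↦ ?_
  obtain ⟨x, y, rfl⟩ := exists_eq_sq_mul_sq_alternatingGroup_four g
  rw [map_mul, map_pow, map_pow, Int.units_sq, Int.units_sq, mul_one, MonoidHom.one_apply]

theorem index_kleinFour_fin_four : (alternatingGroup.kleinFour (Fin 4)).index = 3 := by
  have h := (alternatingGroup.kleinFour (Fin 4)).card_mul_index
  rw [alternatingGroup.kleinFour_card_of_card_eq_four (by simp), card_alternatingGroup_four] at h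
  lia

variable {G : Type*} [Group G]

theorem nonempty_mulEquiv_alternatingGroup_of_injective {n : ℕ}
    {f : G →* Equiv.Perm (Fin n)} (hf : Function.Injective f) (hG : 2 * Nat.card G = n.factorial) :
    Nonempty (G ≃* alternatingGroup (Fin n)) := by
  have hindex : f.range.index = 2 := by
    have h := f.range.card_mul_index
    rw [← Nat.card_congr (f.ofInjective hf).toEquiv, Nat.card_perm, Nat.card_fin,
      ← hG, mul_comm 2] at h
    exact Nat.eq_of_mul_eq_mul_left (by have := n.factorial_pos; lia) h
  have := Equiv.Perm.eq_alternatingGroup_of_index_eq_two hindex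
  exact ⟨(f.ofInjective hf).trans (MulEquiv.subgroupCongr this)⟩

theorem exists_injective_monoidHom_perm_of_normalCore_eq_bot {P : Subgroup G}
    (hP : P.normalCore = ⊥) {n : ℕ} [NeZero n] (hn : P.index = n) :
    ∃ f : G →* Equiv.Perm (Fin n), Function.Injective f := by
  have : Finite (G ⧸ P) := Nat.finite_of_card_ne_zero (hn.trans_ne (NeZero.ne n))
  have hinj : Function.Injective (MulAction.toPermHom G (G ⧸ P)) := by
    rw [← MonoidHom.ker_eq_bot_iff, ← Subgroup.normalCore_eq_ker, hP]
  let e : G ⧸ P ≃ Fin n := Finite.equivFinOfCardEq hn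
  exact ⟨e.permCongrHom.toMonoidHom.comp (MulAction.toPermHom G (G ⧸ P)),
    e.permCongrHom.injective.comp hinj⟩

theorem nonempty_mulEquiv_alternatingGroup_four [Subsingleton (G →* ℤˣ)] (hG : Nat.card G = 12) :
    Nonempty (G ≃* alternatingGroup (Fin 4)) := by
  have : Finite G := Nat.finite_of_card_ne_zero (by lia)
  have : Fact (Nat.Prime 3) := ⟨Nat.prime_three⟩
  obtain ⟨P, hP⟩ := Sylow.exists_subgroup_card_pow_prime (G := G) 3 (n := 1)
    (by rw [hG]; norm_num)
  have hindex : P.index = 4 := by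
    have h := P.card_mul_index
    lia
  have hcore : P.normalCore = ⊥ := by
    have hdvd : Nat.card P.normalCore ∣ 3 := by
      simpa only [hP, pow_one] using Subgroup.card_dvd_of_le P.normalCore_le
    rcases (Nat.dvd_prime Nat.prime_three).1 hdvd with h | h
    · exact Subgroup.card_eq_one.1 h
    · have heq : P.normalCore = P :=
        Subgroup.eq_of_le_of_card_ge P.normalCore_le (by rw [h, hP, pow_one])
      exact absurd (heq ▸ inferInstance : P.Normal) (not_normal_of_index_eq_four hindex)
  obtain ⟨f, hf⟩ := exists_injective_monoidHom_perm_of_normalCore_eq_bot hcore hindex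
  exact nonempty_mulEquiv_alternatingGroup_of_injective hf (by rw [hG]; rfl)

end AlternatingGroupFour

open SquareClassGroup

section CubicTower

variable {F L K : Type*} [Field F] [Field L] [Field K] [Algebra F L] [Algebra F K] [Algebra L K]
  [IsScalarTower F L K] [FiniteDimensional F L] [IsGalois F L]

theorem ker_baseChange_le_ker_norm [FiniteDimensional F K] [IsGalois F K] [NeZero (2 : K)]
    [Subsingleton ((K ≃ₐ[F] K) →* ℤˣ)] : (baseChange L K).ker ≤ (norm F L).ker := by
  intro c hc
  have h := norm_mem_ker_baseChange (F := F) hc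
  rwa [ker_baseChange_eq_bot, Subgroup.mem_bot] at h

theorem card_aut_mul_card_aut [FiniteDimensional F K] [IsGalois F K] :
    Nat.card (L ≃ₐ[F] L) * Nat.card (K ≃ₐ[L] K) = Nat.card (K ≃ₐ[F] K) := by
  have : IsGalois L K := IsGalois.tower_top_of_isGalois F L K
  have : FiniteDimensional L K := FiniteDimensional.right F L K
  simp only [IsGalois.card_aut_eq_finrank, Module.finrank_mul_finrank]

theorem card_ker_baseChange_eq_four_of_mulEquiv [FiniteDimensional F K] [IsGalois F K]
    [NeZero (2 : K)] (hL : Module.finrank F L = 3)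
    (e : (K ≃ₐ[F] K) ≃* alternatingGroup (Fin 4)) : Nat.card (baseChange L K).ker = 4 := by
  have : IsGalois L K := IsGalois.tower_top_of_isGalois F L K
  have : FiniteDimensional L K := FiniteDimensional.right F L K
  have hcard : Nat.card (K ≃ₐ[L] K) = 4 := by
    have h := card_aut_mul_card_aut (F := F) (L := L) (K := K)
    rw [IsGalois.card_aut_eq_finrank, hL, Nat.card_congr e.toEquiv, card_alternatingGroup_four] at h
    lia
  let r : (K ≃ₐ[L] K) →* alternatingGroup (Fin 4) :=
    e.toMonoidHom.comp (AlgEquiv.restrictScalarsHom F)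
  have hr : Function.Injective r := e.injective.comp (AlgEquiv.restrictScalars_injective F)
  have hsq (g : K ≃ₐ[L] K) : g ^ 2 = 1 := hr <| by
    have h4 : g ^ 4 = 1 := hcard ▸ pow_card_eq_one'
    rw [map_pow, map_one]
    apply sq_eq_one_of_pow_four_eq_one_alternatingGroup_four
    rw [← map_pow, h4, map_one]
  rw [card_ker_baseChange, card_monoidHom_units_int_of_forall_sq_eq_one hsq, hcard]

end CubicTower

section ConjugateRoots

variable {F L K : Type*} [Field F] [Field L] [Field K] [Algebra F L] [Algebra F K] [Algebra L K]
  [IsScalarTower F L K] [IsGalois F L]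

theorem sq_apply_eq_algebraMap_restrictNormal {a : L} {α : K} (hα : α ^ 2 = algebraMap L K a)
    (t : K ≃ₐ[F] K) : (t α) ^ 2 = algebraMap L K (t.restrictNormal L a) := by
  rw [AlgEquiv.restrictNormal_commutes, ← hα, map_pow]

theorem apply_eq_or_eq_neg_of_restrictNormal_eq {a : L} {α : K} (hα : α ^ 2 = algebraMap L K a)
    {s t : K ≃ₐ[F] K} (hst : s.restrictNormal L = t.restrictNormal L) : s α = t α ∨ s α = -t α := by
  rw [← sq_eq_sq_iff_eq_or_eq_neg, sq_apply_eq_algebraMap_restrictNormal hα,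
    sq_apply_eq_algebraMap_restrictNormal hα, hst]

variable [FiniteDimensional F L] {τ : (L ≃ₐ[F] L) → (K ≃ₐ[F] K)}
  (hτ : ∀ σ, (τ σ).restrictNormal L = σ)

include hτ in
theorem prod_apply_mem_range {a : L} {α : K} (hα : α ^ 2 = algebraMap L K a)
    (ha : IsSquare (Algebra.norm F a)) : ∏ σ, τ σ α ∈ Set.range (algebraMap F K) := by
  obtain ⟨d, hd⟩ := ha
  have hsq : (∏ σ, τ σ α) ^ 2 = algebraMap F K d ^ 2 := by
    rw [← map_pow, pow_two d, ← hd, IsScalarTower.algebraMap_apply F L K,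
      Algebra.norm_eq_prod_automorphisms, map_prod, ← Finset.prod_pow]
    exact Finset.prod_congr rfl fun σ _ ↦ by
      rw [sq_apply_eq_algebraMap_restrictNormal hα, hτ]
  rcases sq_eq_sq_iff_eq_or_eq_neg.1 hsq with h | h
  · exact ⟨d, h.symm⟩
  · exact ⟨-d, by rw [h, map_neg]⟩

include hτ in
theorem prod_kummerChar_eq_one [NeZero (2 : K)] {a : Lˣ} {α : K} (hα : α ^ 2 = algebraMap L K a)
    (ha : IsSquare (Algebra.norm F (a : L))) (v : K ≃ₐ[L] K) :
    ∏ σ, kummerChar (sq_apply_eq_algebraMap_restrictNormal hα (τ σ)) v = 1 := by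
  obtain ⟨d, hd⟩ := prod_apply_mem_range hτ hα ha
  have hprod : ∏ σ, τ σ α ≠ 0 :=
    Finset.prod_ne_zero_iff.2 fun σ _ ↦ by simpa using ne_zero_of_sq_eq_algebraMap_unit hα
  refine eq_of_units_int_cast_mul_eq hprod ?_
  calc _ = ∏ σ, v (τ σ α) := by
        simp only [apply_eq_kummerChar_mul (sq_apply_eq_algebraMap_restrictNormal hα _),
          Finset.prod_mul_distrib, Units.coe_prod, Int.cast_prod]
    _ = ∏ σ, τ σ α := by
        rw [← map_prod, ← hd, IsScalarTower.algebraMap_apply F L K, AlgEquiv.commutes]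
    _ = _ := by rw [Units.val_one, Int.cast_one, one_mul]

include hτ in
omit [FiniteDimensional F L] in
theorem apply_conj_eq_of_forall_kummerChar_eq_one {a : L} {α : K} (hα : α ^ 2 = algebraMap L K a)
    {v : K ≃ₐ[L] K}
    (hv : ∀ σ, kummerChar (sq_apply_eq_algebraMap_restrictNormal hα (τ σ)) v = 1) (t : K ≃ₐ[F] K) :
    v (t α) = t α := by
  have hfix := (kummerChar_eq_one_iff _).1 (hv (t.restrictNormal L))
  rcases apply_eq_or_eq_neg_of_restrictNormal_eq hα (hτ (t.restrictNormal L)).symm with h | h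
  · rw [h, hfix]
  · rw [h, map_neg, hfix]

theorem exists_injective_monoidHom_pi [Normal F K] [NeZero (2 : K)] {a : Lˣ} {α : K}
    (hα : α ^ 2 = algebraMap L K a) (ha : IsSquare (Algebra.norm F (a : L)))
    (hfix : ∀ v : K ≃ₐ[L] K, (∀ t : K ≃ₐ[F] K, v (t α) = t α) → v = 1) :
    ∃ f : (K ≃ₐ[L] K) →* ({σ : L ≃ₐ[F] L // σ ≠ 1} → ℤˣ), Function.Injective f := by
  choose τ hτ using AlgEquiv.restrictNormalHom_surjective (F := F) (K₁ := L) K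
  refine ⟨MonoidHom.pi fun σ ↦ kummerChar (sq_apply_eq_algebraMap_restrictNormal hα (τ σ)), ?_⟩
  rw [injective_iff_map_eq_one]
  intro v hv
  refine hfix v (apply_conj_eq_of_forall_kummerChar_eq_one hτ hα fun σ ↦ ?_)
  have hne {σ : L ≃ₐ[F] L} (hσ : σ ≠ 1) :
      kummerChar (sq_apply_eq_algebraMap_restrictNormal hα (τ σ)) v = 1 := congrFun hv ⟨σ, hσ⟩
  by_cases hσ : σ = 1
  · rw [← prod_kummerChar_eq_one hτ hα ha v, hσ, eq_comm]
    exact Finset.prod_eq_single 1 (fun σ _ ↦ hne) (by simp)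
  · exact hne hσ

end ConjugateRoots

section AlternatingExtension

variable {F L K : Type*} [Field F] [Field L] [Field K] [Algebra F L] [Algebra F K] [Algebra L K]
  [IsScalarTower F L K] [FiniteDimensional F L] [IsGalois F L]

theorem card_subtype_ne_one_aut : Nat.card {σ : L ≃ₐ[F] L // σ ≠ 1} = Module.finrank F L - 1 := by
  classical
  rw [Nat.card_eq_fintype_card, Fintype.card_subtype_compl, Fintype.card_subtype_eq,
    ← Nat.card_eq_fintype_card, IsGalois.card_aut_eq_finrank]

section

variable [NeZero (2 : K)] [Normal F K] {a : Lˣ} {α : K} (hα : α ^ 2 = algebraMap L K a)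
  (ha : IsSquare (Algebra.norm F (a : L)))
  (hfix : ∀ v : K ≃ₐ[L] K, (∀ t : K ≃ₐ[F] K, v (t α) = t α) → v = 1)
include hα ha hfix

theorem card_aut_dvd_two_pow : Nat.card (K ≃ₐ[L] K) ∣ 2 ^ (Module.finrank F L - 1) := by
  obtain ⟨f, hf⟩ := exists_injective_monoidHom_pi hα ha hfix
  have h := Subgroup.card_dvd_of_injective f hf
  rwa [Nat.card_fun, card_subtype_ne_one_aut, Nat.card_eq_fintype_card (α := ℤˣ),
    Fintype.card_units_int] at h

theorem aut_sq_eq_one (v : K ≃ₐ[L] K) : v ^ 2 = 1 := by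
  obtain ⟨f, hf⟩ := exists_injective_monoidHom_pi hα ha hfix
  refine hf ?_
  ext σ
  rw [map_pow, map_one, Pi.pow_apply, Int.units_sq, Pi.one_apply]

end

theorem two_lt_card_ker_baseChange_inf_ker_norm [Normal F K] (hL : Odd (Module.finrank F L))
    [Finite (baseChange L K).ker] {c : SquareClassGroup L} (hc : c ≠ 1)
    (hker : c ∈ (baseChange L K).ker) (hnorm : c ∈ (norm F L).ker) :
    2 < Nat.card ((baseChange L K).ker ⊓ (norm F L).ker : Subgroup (SquareClassGroup L)) := by
  obtain ⟨σ, hσ⟩ := exists_conj_ne hL hc hnorm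
  have hσ1 : conj σ c ≠ 1 := (conj_eq_one_iff σ).not.2 hc
  have hfin : ((baseChange L K).ker ∩ (norm F L).ker : Set (SquareClassGroup L)).Finite :=
    (Set.toFinite ((baseChange L K).ker : Set (SquareClassGroup L))).inter_of_left _
  refine (Set.two_lt_ncard hfin).2 ⟨1, ⟨one_mem _, one_mem _⟩, c, ⟨hker, hnorm⟩, conj σ c,
    ⟨conj_mem_ker_baseChange σ hker, ?_⟩, hc.symm, hσ1.symm, hσ.symm⟩
  exact (norm_conj σ c).trans hnorm

section

variable [FiniteDimensional F K] [IsGalois F K] [NeZero (2 : K)] (hL : Module.finrank F L = 3)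
  {a : Lˣ} {α : K} (hα : α ^ 2 = algebraMap L K a) (ha : IsSquare (Algebra.norm F (a : L)))
  (ha' : ¬ IsSquare (a : L)) (hfix : ∀ v : K ≃ₐ[L] K, (∀ t : K ≃ₐ[F] K, v (t α) = t α) → v = 1)
include hL hα ha ha' hfix

theorem card_aut_eq_four_and_ker_baseChange_le_ker_norm :
    Nat.card (K ≃ₐ[L] K) = 4 ∧ (baseChange L K).ker ≤ (norm F L).ker := by
  have : IsGalois L K := IsGalois.tower_top_of_isGalois F L K
  have : FiniteDimensional L K := FiniteDimensional.right F L K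
  have hcard : Nat.card (baseChange L K).ker = Nat.card (K ≃ₐ[L] K) := by
    rw [card_ker_baseChange,
      card_monoidHom_units_int_of_forall_sq_eq_one (aut_sq_eq_one hα ha hfix)]
  have : Finite (baseChange L K).ker :=
    Nat.finite_of_card_ne_zero (hcard.trans_ne Nat.card_pos.ne')
  have hdvd : Nat.card (K ≃ₐ[L] K) ∣ 4 := by
    simpa [hL] using card_aut_dvd_two_pow hα ha hfix
  have hlt : 2 < Nat.card ((baseChange L K).ker ⊓ (norm F L).ker : Subgroup _) :=
    two_lt_card_ker_baseChange_inf_ker_norm (c := a) (by rw [hL]; decide)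
      (mk_eq_one_iff.not.2 ha') (mk_mem_ker_baseChange_iff.2 ⟨α, by rw [← hα, pow_two]⟩)
      (mk_eq_one_iff.2 ha)
  have hle : (baseChange L K).ker ⊓ (norm F L).ker ≤ (baseChange L K).ker := inf_le_left
  have hfour (n : ℕ) (hn : n ∣ 4) (hn' : 2 < n) : n = 4 := by
    have := Nat.le_of_dvd (by norm_num) hn
    interval_cases n <;> lia
  have hinf := hfour _ ((Subgroup.card_dvd_of_le hle).trans (hcard ▸ hdvd)) hlt
  have hfour_le := Nat.le_of_dvd Nat.card_pos (Subgroup.card_dvd_of_le hle)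
  have hle_four := Nat.le_of_dvd (by norm_num) hdvd
  exact ⟨by lia, inf_eq_left.1 (Subgroup.eq_of_le_of_card_ge hle (by lia))⟩

theorem nonempty_mulEquiv_alternatingGroup_four_of_sq_eq :
    Nonempty ((K ≃ₐ[F] K) ≃* alternatingGroup (Fin 4)) := by
  obtain ⟨hcard, hle⟩ := card_aut_eq_four_and_ker_baseChange_le_ker_norm hL hα ha ha' hfix
  have hchar : Nat.card ((K ≃ₐ[F] K) →* ℤˣ) = 1 := by
    rw [← card_ker_baseChange, ker_baseChange_eq_bot_of_le_ker_norm (by rw [hL]; decide) hle,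
      Subgroup.card_bot]
  have : Subsingleton ((K ≃ₐ[F] K) →* ℤˣ) := (Nat.card_eq_one_iff_unique.1 hchar).1
  apply nonempty_mulEquiv_alternatingGroup_four
  rw [← card_aut_mul_card_aut (L := L), hcard, IsGalois.card_aut_eq_finrank, hL]

end

end AlternatingExtension

section NormalCompositum

variable {F L Ω : Type*} [Field F] [Field L] [Field Ω] [Algebra F Ω] [Algebra L Ω]

variable (F L) in
/-- The compositum in `Ω` of `L` and the normal closure of `F(α) / F`. -/
def normalCompositum (α : Ω) : IntermediateField L Ω :=
  IntermediateField.adjoin L ((minpoly F α).rootSet Ω)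

variable {α : Ω} [Normal F Ω]

theorem mem_rootSet_minpoly_iff_exists_algEquiv {β : Ω} :
    β ∈ (minpoly F α).rootSet Ω ↔ ∃ t : Ω ≃ₐ[F] Ω, t α = β := by
  rw [← isConjRoot_iff_mem_minpoly_rootSet (Normal.isIntegral inferInstance α)]
  exact ⟨fun h ↦ isConjRoot_iff_exists_algEquiv.1 h.symm,
    fun h ↦ (isConjRoot_iff_exists_algEquiv.2 h).symm⟩

theorem apply_mem_rootSet_minpoly (t : Ω ≃ₐ[F] Ω) : t α ∈ (minpoly F α).rootSet Ω :=
  mem_rootSet_minpoly_iff_exists_algEquiv.2 ⟨t, rfl⟩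

theorem self_mem_normalCompositum : α ∈ normalCompositum F L α :=
  IntermediateField.subset_adjoin _ _ (apply_mem_rootSet_minpoly 1)

variable [Algebra F L] [IsScalarTower F L Ω]

omit [Normal F Ω] in
instance isScalarTower_intermediateField_of_tower (K : IntermediateField L Ω) :
    IsScalarTower F K Ω :=
  IsScalarTower.of_algebraMap_eq fun _ ↦ rfl

theorem normalCompositum_le_of_normal {K : IntermediateField L Ω} [Normal F K] (hα : α ∈ K) :
    normalCompositum F L α ≤ K := by
  rw [normalCompositum, IntermediateField.adjoin_le_iff]
  intro β hβ
  obtain ⟨t, rfl⟩ := mem_rootSet_minpoly_iff_exists_algEquiv.1 hβ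
  have h := t.restrictNormal_commutes K ⟨α, hα⟩
  exact h ▸ SetLike.coe_mem (t.restrictNormal K ⟨α, hα⟩)

theorem apply_mem_normalCompositum [Normal F L] (t : Ω ≃ₐ[F] Ω) {x : Ω}
    (hx : x ∈ normalCompositum F L α) : t x ∈ normalCompositum F L α := by
  induction hx using IntermediateField.adjoin_induction with
  | mem x hx =>
    obtain ⟨s, rfl⟩ := mem_rootSet_minpoly_iff_exists_algEquiv.1 hx
    exact IntermediateField.subset_adjoin _ _ (apply_mem_rootSet_minpoly (t * s))
  | algebraMap l =>
    rw [← AlgEquiv.restrictNormal_commutes]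
    exact IntermediateField.algebraMap_mem _ _
  | add x y _ _ hx hy => simpa only [map_add] using add_mem hx hy
  | inv x _ hx => simpa only [map_inv₀] using inv_mem hx
  | mul x y _ _ hx hy => simpa only [map_mul] using mul_mem hx hy

theorem normal_intermediateField_of_forall_apply_mem {K : IntermediateField L Ω}
    (h : ∀ t : Ω ≃ₐ[F] Ω, ∀ x ∈ K, t x ∈ K) : Normal F K := by
  have hK : Normal F (K.restrictScalars F) := by
    rw [IntermediateField.normal_iff_forall_map_le']
    rintro t _ ⟨x, hx, rfl⟩
    exact h t x hx
  exact hK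

instance normal_normalCompositum [Normal F L] : Normal F (normalCompositum F L α) :=
  normal_intermediateField_of_forall_apply_mem fun t _ ↦ apply_mem_normalCompositum t

instance finiteDimensional_normalCompositum [FiniteDimensional F L] :
    FiniteDimensional F (normalCompositum F L α) := by
  have : Finite ((minpoly F α).rootSet Ω) := Polynomial.rootSet_finite _ _
  have : FiniteDimensional L (normalCompositum F L α) :=
    IntermediateField.finiteDimensional_adjoin fun x _ ↦
      (Normal.isIntegral (F := F) inferInstance x).tower_top
  exact FiniteDimensional.trans F L _

theorem eq_one_of_forall_apply_eq_normalCompositum [Normal F L]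
    (v : normalCompositum F L α ≃ₐ[L] normalCompositum F L α)
    (hv : ∀ t : normalCompositum F L α ≃ₐ[F] normalCompositum F L α,
      v (t ⟨α, self_mem_normalCompositum⟩) = t ⟨α, self_mem_normalCompositum⟩) : v = 1 := by
  have hid : (v : normalCompositum F L α →ₐ[L] normalCompositum F L α) = AlgHom.id L _ := by
    refine IntermediateField.algHom_ext_of_eq_adjoin L rfl fun x hx ↦ ?_
    obtain ⟨t, rfl⟩ := mem_rootSet_minpoly_iff_exists_algEquiv.1 hx
    have ht : t.restrictNormal (normalCompositum F L α) ⟨α, self_mem_normalCompositum⟩ =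
        ⟨t α, IntermediateField.subset_adjoin _ _ hx⟩ :=
      Subtype.ext (t.restrictNormal_commutes (normalCompositum F L α) ⟨α, _⟩)
    exact ht ▸ hv (t.restrictNormal _)
  exact AlgEquiv.ext fun x ↦ DFunLike.congr_fun hid x

end NormalCompositum

section PartitionCount

theorem card_mul_sub_one_of_existsUnique_mem {G ι : Type*} [Group G] {N : Subgroup G} [Finite N]
    {W : ι → Subgroup G} {n : ℕ} (hcard : ∀ i, Nat.card (W i) = n) (hle : ∀ i, W i ≤ N)
    (hW : ∀ g ∈ N, g ≠ 1 → ∃! i, g ∈ W i) : Nat.card ι * (n - 1) = Nat.card N - 1 := by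
  have hcard_sdiff (H : Subgroup G) : Nat.card ((H : Set G) \ {1} : Set G) = Nat.card H - 1 :=
    Set.ncard_sdiff_singleton_of_mem (one_mem H)
  have hdisj : Pairwise (Function.onFun Disjoint fun i ↦ (W i : Set G) \ {1}) := by
    refine fun i j hij ↦ Set.disjoint_left.2 fun g hi hj ↦ hij ?_
    exact (hW g (hle i hi.1) hi.2).unique hi.1 hj.1
  have hunion : ⋃ i, (W i : Set G) \ {1} = (N : Set G) \ {1} := by
    refine (Set.iUnion_subset fun i ↦ Set.sdiff_subset_sdiff_left (hle i)).antisymm fun g hg ↦ ?_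
    obtain ⟨i, hi, -⟩ := hW g hg.1 hg.2
    exact Set.mem_iUnion.2 ⟨i, hi, hg.2⟩
  have hfin (i : ι) : Finite ((W i : Set G) \ {1} : Set G) :=
    Set.Finite.subset (Set.toFinite (N : Set G)) fun _ hg ↦ hle i hg.1
  have e (i : ι) : ((W i : Set G) \ {1} : Set G) ≃ Fin (n - 1) :=
    Finite.equivFinOfCardEq (by rw [hcard_sdiff, hcard])
  rw [← hcard_sdiff, ← hunion, Nat.card_congr (Set.unionEqSigmaOfDisjoint hdisj),
    Nat.card_congr (Equiv.sigmaCongrRight e), Nat.card_congr (Equiv.sigmaEquivProd _ _),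
    Nat.card_prod, Nat.card_fin]

end PartitionCount

section AlternatingFour

/-- `K / F` is a finite Galois extension with Galois group isomorphic to `G`. The subfields counted
by `nu F G` are those with this property. -/
def IsGaloisWithGroup (F K : Type*) [Field F] [Field K] [Algebra F K] (G : Type*) [Group G] :
    Prop :=
  FiniteDimensional F K ∧ IsGalois F K ∧ Nonempty ((K ≃ₐ[F] K) ≃* G)

theorem IsGaloisWithGroup.finrank_eq {F K G : Type*} [Field F] [Field K] [Algebra F K] [Group G]
    (hK : IsGaloisWithGroup F K G) : Module.finrank F K = Nat.card G := by
  obtain ⟨_, _, ⟨e⟩⟩ := hK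
  rw [← IsGalois.card_aut_eq_finrank, Nat.card_congr e.toEquiv]

variable {F L : Type*} [Field F] [CharZero F] [Field L] [Algebra F L] [FiniteDimensional F L]
  [IsGalois F L]

section

variable {K : Type*} [Field K] [Algebra F K] [Algebra L K] [IsScalarTower F L K]
  (hK : IsGaloisWithGroup F K (alternatingGroup (Fin 4)))
include hK

theorem IsGaloisWithGroup.card_ker_baseChange (hL : Module.finrank F L = 3) :
    Nat.card (baseChange L K).ker = 4 := by
  obtain ⟨_, _, ⟨e⟩⟩ := hK
  have : CharZero K := Algebra.charZero_of_charZero F K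
  exact card_ker_baseChange_eq_four_of_mulEquiv hL e

theorem IsGaloisWithGroup.ker_baseChange_le_ker_norm : (baseChange L K).ker ≤ (norm F L).ker := by
  obtain ⟨_, _, ⟨e⟩⟩ := hK
  have : CharZero K := Algebra.charZero_of_charZero F K
  have : Subsingleton ((K ≃ₐ[F] K) →* ℤˣ) := (e.monoidHomCongrLeftEquiv).subsingleton
  exact _root_.ker_baseChange_le_ker_norm

end

variable {Ω : Type*} [Field Ω] [Algebra F Ω] [Algebra L Ω] [IsScalarTower F L Ω] [Normal F Ω]

theorem isGaloisWithGroup_normalCompositum (hL : Module.finrank F L = 3) {a : Lˣ} {α : Ω}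
    (hα : α ^ 2 = algebraMap L Ω a) (ha : IsSquare (Algebra.norm F (a : L)))
    (ha' : ¬IsSquare (a : L)) :
    IsGaloisWithGroup F (normalCompositum F L α) (alternatingGroup (Fin 4)) := by
  have : CharZero (normalCompositum F L α) := Algebra.charZero_of_charZero F _
  refine ⟨inferInstance, ⟨⟩, ?_⟩
  have : IsGalois F (normalCompositum F L α) := ⟨⟩
  exact nonempty_mulEquiv_alternatingGroup_four_of_sq_eq hL
    (α := ⟨α, self_mem_normalCompositum⟩) (Subtype.ext hα) ha ha'
    eq_one_of_forall_apply_eq_normalCompositum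

theorem mk_mem_ker_baseChange_iff_mem {a : Lˣ} {α : Ω} (hα : α ^ 2 = algebraMap L Ω a)
    {K : IntermediateField L Ω} : (a : SquareClassGroup L) ∈ (baseChange L K).ker ↔ α ∈ K := by
  rw [mk_mem_ker_baseChange_iff]
  refine ⟨fun ⟨β, hβ⟩ ↦ ?_, fun h ↦ ⟨⟨α, h⟩, Subtype.ext (hα.symm.trans (pow_two α))⟩⟩
  have hsq : α ^ 2 = (β : Ω) ^ 2 :=
    hα.trans ((congrArg Subtype.val hβ).trans (pow_two (β : Ω)).symm)
  rcases sq_eq_sq_iff_eq_or_eq_neg.1 hsq with h | h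
  · exact h ▸ β.2
  · exact h ▸ neg_mem β.2

theorem existsUnique_isGaloisWithGroup_mem_ker_baseChange [IsAlgClosed Ω]
    (hL : Module.finrank F L = 3) {c : SquareClassGroup L} (hnorm : c ∈ (norm F L).ker)
    (hc : c ≠ 1) :
    ∃! K : {K : IntermediateField L Ω // IsGaloisWithGroup F K (alternatingGroup (Fin 4))},
      c ∈ (baseChange L K).ker := by
  obtain ⟨a, rfl⟩ := QuotientGroup.mk_surjective c
  obtain ⟨α, hα⟩ := IsAlgClosed.exists_pow_nat_eq (algebraMap L Ω a) two_pos
  have hK₀ := isGaloisWithGroup_normalCompositum hL hα (mk_eq_one_iff.1 hnorm)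
    (mk_eq_one_iff.not.1 hc)
  refine ⟨⟨normalCompositum F L α, hK₀⟩,
    (mk_mem_ker_baseChange_iff_mem hα).2 self_mem_normalCompositum, ?_⟩
  rintro ⟨K, hK⟩ hcK
  obtain ⟨_, _, -⟩ := id hK
  have : FiniteDimensional L K := FiniteDimensional.right F L K
  have hrank : Module.finrank L (normalCompositum F L α) = Module.finrank L K := by
    apply Nat.eq_of_mul_eq_mul_left (Module.finrank_pos (R := F) (M := L))
    rw [Module.finrank_mul_finrank, Module.finrank_mul_finrank, hK₀.finrank_eq, hK.finrank_eq]
  exact Subtype.ext (IntermediateField.eq_of_le_of_finrank_eq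
    (normalCompositum_le_of_normal ((mk_mem_ker_baseChange_iff_mem hα).1 hcK)) hrank).symm

variable (F L Ω) in
theorem card_isGaloisWithGroup_mul_three [IsAlgClosed Ω] [Finite (norm F L).ker]
    (hL : Module.finrank F L = 3) :
    Nat.card {K : IntermediateField L Ω // IsGaloisWithGroup F K (alternatingGroup (Fin 4))} * 3 =
      Nat.card (norm F L).ker - 1 :=
  card_mul_sub_one_of_existsUnique_mem (fun K ↦ K.2.card_ker_baseChange hL)
    (fun K ↦ K.2.ker_baseChange_le_ker_norm)
    fun _ ↦ existsUnique_isGaloisWithGroup_mem_ker_baseChange hL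

end AlternatingFour

section CubicSubfield

variable {F Ω : Type*} [Field F] [Field Ω] [Algebra F Ω]

theorem exists_isGalois_finrank_eq_index_le {K : IntermediateField F Ω} [FiniteDimensional F K]
    [IsGalois F K] (H : Subgroup (K ≃ₐ[F] K)) [H.Normal] :
    ∃ L ≤ K, IsGalois F L ∧ Module.finrank F L = H.index := by
  let e := IntermediateField.liftAlgEquiv (IntermediateField.fixedField H)
  refine ⟨_, IntermediateField.lift_le _, IsGalois.of_algEquiv e, ?_⟩
  rw [← e.toLinearEquiv.finrank_eq]
  have h := Module.finrank_mul_finrank F (IntermediateField.fixedField H) K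
  rw [IntermediateField.finrank_fixedField_eq_card, ← IsGalois.card_aut_eq_finrank F K,
    ← H.index_mul_card] at h
  exact Nat.eq_of_mul_eq_mul_right Nat.card_pos h

theorem exists_cubic_le_of_isGaloisWithGroup {K : IntermediateField F Ω}
    (hK : IsGaloisWithGroup F K (alternatingGroup (Fin 4))) :
    ∃ L ≤ K, IsGalois F L ∧ Module.finrank F L = 3 := by
  obtain ⟨_, _, ⟨e⟩⟩ := hK
  have : (alternatingGroup.kleinFour (Fin 4)).Normal := alternatingGroup.normal_kleinFour (by simp)
  obtain ⟨L, hLK, hL, hrank⟩ := exists_isGalois_finrank_eq_index_le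
    ((alternatingGroup.kleinFour (Fin 4)).comap e.toMonoidHom)
  refine ⟨L, hLK, hL, ?_⟩
  rw [hrank, Subgroup.index_comap_of_surjective _ e.surjective, index_kleinFour_fin_four]

theorem card_subtype_isGaloisWithGroup_of_forall_le {G : Type*} [Group G]
    {L : IntermediateField F Ω}
    (hL : ∀ K : IntermediateField F Ω, IsGaloisWithGroup F K G → L ≤ K) :
    Nat.card {K : IntermediateField F Ω // IsGaloisWithGroup F K G} =
      Nat.card {K : IntermediateField L Ω // IsGaloisWithGroup F K G} :=
  Nat.card_congr
    { toFun := fun K ↦ ⟨IntermediateField.extendScalars (hL K K.2), K.2⟩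
      invFun := fun K ↦ ⟨K.1.restrictScalars F, K.2⟩
      left_inv := fun _ ↦ rfl
      right_inv := fun _ ↦ rfl }

end CubicSubfield

theorem nu_alternatingGroup_four_mul_three {F : Type*} [Field F] [CharZero F]
    {L : IntermediateField F (AlgebraicClosure F)} [IsGalois F L]
    [Finite (norm F L).ker] (hrank : Module.finrank F L = 3)
    (hL : ∀ L' : IntermediateField F (AlgebraicClosure F),
      IsGalois F L' → Module.finrank F L' = 3 → L' = L) :
    nu F (alternatingGroup (Fin 4)) * 3 = Nat.card (norm F L).ker - 1 := by
  have : FiniteDimensional F L := FiniteDimensional.of_finrank_pos (by lia)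
  rw [← card_isGaloisWithGroup_mul_three F L (AlgebraicClosure F) hrank,
    ← card_subtype_isGaloisWithGroup_of_forall_le]
  · rfl
  intro K hK
  obtain ⟨L', hle, hL', hrank'⟩ := exists_cubic_le_of_isGaloisWithGroup hK
  exact hL L' hL' hrank' ▸ hle

section PadicTwo

theorem card_squareClassGroup_of_finiteDimensional_padic (E : Type*) [Field E] [Algebra ℚ_[2] E]
    [FiniteDimensional ℚ_[2] E] :
    Nat.card (SquareClassGroup E) = 2 ^ (Module.finrank ℚ_[2] E + 2) :=
  index_range_sq_units_of_finiteDimensional_padic E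

theorem card_ker_norm_of_finiteDimensional_padic {F L : Type*} [Field F] [Field L]
    [Algebra ℚ_[2] F] [FiniteDimensional ℚ_[2] F] [Algebra F L] [FiniteDimensional F L]
    (h : Odd (Module.finrank F L)) :
    Nat.card (norm F L).ker = 2 ^ (Module.finrank ℚ_[2] F * (Module.finrank F L - 1)) := by
  let : Algebra ℚ_[2] L := Algebra.compHom L (algebraMap ℚ_[2] F)
  have : IsScalarTower ℚ_[2] F L := IsScalarTower.of_algebraMap_eq fun _ ↦ rfl
  have : FiniteDimensional ℚ_[2] L := FiniteDimensional.trans ℚ_[2] F L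
  apply Nat.eq_of_mul_eq_mul_right (pow_pos two_pos (Module.finrank ℚ_[2] F + 2))
  rw [← card_squareClassGroup_of_finiteDimensional_padic F, card_ker_norm_mul_card h,
    card_squareClassGroup_of_finiteDimensional_padic,
    card_squareClassGroup_of_finiteDimensional_padic,
    ← Module.finrank_mul_finrank ℚ_[2] F L, ← pow_add]
  obtain ⟨k, hk⟩ := h
  rw [hk, Nat.add_sub_cancel]
  ring

end PadicTwo

theorem stmt6 (F : Type*) [Field F] [Algebra ℚ_[2] F] [FiniteDimensional ℚ_[2] F]
    (m : ℕ) (hm : Module.finrank ℚ_[2] F = m)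
    (hμ3 : ¬ ∃ ζ : F, IsPrimitiveRoot ζ 3) :
    nu F (alternatingGroup (Fin 4)) = (2 ^ (2 * m) - 1) / 3 := by
  have : CharZero F := charZero_of_injective_algebraMap (algebraMap ℚ_[2] F).injective
  obtain ⟨L, ⟨hL, hrank⟩, huniq⟩ :=
    existsUnique_isGalois_finrank_eq_prime 2 Nat.prime_three (by decide) hμ3
  have : FiniteDimensional F L := FiniteDimensional.of_finrank_pos (by lia)
  have hker : Nat.card (norm F L).ker = 2 ^ (2 * m) := by
    rw [card_ker_norm_of_finiteDimensional_padic (by rw [hrank]; decide), hm, hrank, mul_comm]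
  have : Finite (norm F L).ker := Nat.finite_of_card_ne_zero (by rw [hker]; positivity)
  have hcount : nu F (alternatingGroup (Fin 4)) * 3 = 2 ^ (2 * m) - 1 := by
    rw [← hker, nu_alternatingGroup_four_mul_three hrank fun L' h h' ↦ huniq L' ⟨h, h'⟩]
  rw [← hcount, Nat.mul_div_cancel _ three_pos]
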